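/- arXiv:1305.6270 — 4 statements merged into one kernel-verified Lean document; each statement's English description precedes it below -/
import Mathlib

section
/- Let Λ ⊂ ℤ^d be a finite rectangular box with an even number of sites, invariant under the reflection θ, and let (c_i)_{i∈Λ} be a Majorana family indexed by Λ. Assume the couplings satisfy J_{(θi θj)} = J_{(ij)} for every bond. Let C = (i_1, …, i_{2L}) be a non-degenerate loop satisfying θ i_k = i_{2L+1−k} for all k (so that θ(C) = −C and C crosses the reflection hyperplane). Then the minimum over all antisymmetric sign assignments u of the least eigenvalue Ẽ_0(u) of H̃_u is attained at some sign assignment u* for which the loop C is vortex-free, i.e. −∏_{(ij)∈C} u*_{ij} = 1. -/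
noncomputable section
open scoped Classical

/-- A Majorana family indexed by `S`: self-adjoint operators on a nonzero
finite-dimensional complex Hilbert space satisfying the Clifford relations
`cᵢcⱼ + cⱼcᵢ = 2δᵢⱼ·I`. -/
def IsMajoranaFamily {V : Type*} [NormedAddCommGroup V] [InnerProductSpace ℂ V]
    [FiniteDimensional ℂ V] {S : Type*} (c : S → (V →ₗ[ℂ] V)) : Prop :=
  (∀ i, IsSelfAdjoint (c i)) ∧
    ∀ i j, c i * c j + c j * c i = if i = j then (2 : ℂ) • (1 : V →ₗ[ℂ] V) else 0

/-- The least real eigenvalue of an endomorphism. -/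
def leastEig {W : Type*} [AddCommGroup W] [Module ℂ W] (H : W →ₗ[ℂ] W) : ℝ :=
  sInf {t : ℝ | Module.End.HasEigenvalue H (t : ℂ)}

/-- Two operators anticommute. -/
def AntiCommute {A : Type*} [Ring A] (a b : A) : Prop := a * b = -(b * a)

/-- `i` and `j` are nearest neighbors in the cubic lattice `ℤ^d`. -/
def IsNN {d : ℕ} (i j : Fin d → ℤ) : Prop := (∑ k, (i k - j k).natAbs) = 1

/-- `u` is an antisymmetric sign assignment on the nearest-neighbor (ordered) pairs
of `Λ`: `u_{ij} = -u_{ji} = ±1`. -/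
def IsSignAssignment {d : ℕ} (Λ : Finset (Fin d → ℤ))
    (u : (Fin d → ℤ) → (Fin d → ℤ) → ℤ) : Prop :=
  ∀ i ∈ Λ, ∀ j ∈ Λ, IsNN i j → (u i j = 1 ∨ u i j = -1) ∧ u i j = -u j i

/-- The Hamiltonian `H̃_u = Σ_{(ij)} J_{(ij)} u_{ij} i c_i c_j`, each unordered
nearest-neighbor bond of `Λ` counted once (hence the factor `1/2` in front of the sum
over ordered pairs; the two terms of an unordered bond agree since `J` is symmetric,
`u` is antisymmetric and `c_i c_j = -c_j c_i`). -/
def cubicH {V : Type*} [NormedAddCommGroup V] [InnerProductSpace ℂ V]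
    [FiniteDimensional ℂ V] {d : ℕ} (Λ : Finset (Fin d → ℤ))
    (J : (Fin d → ℤ) → (Fin d → ℤ) → ℝ) (u : (Fin d → ℤ) → (Fin d → ℤ) → ℤ)
    (c : (Fin d → ℤ) → (V →ₗ[ℂ] V)) : V →ₗ[ℂ] V :=
  (2 : ℂ)⁻¹ • ∑ i ∈ Λ, ∑ j ∈ Λ,
    if IsNN i j then ((J i j * (u i j : ℝ) : ℝ) : ℂ) • (Complex.I • (c i * c j)) else 0

/-!
The covariance matrix `G` of a ground state is antisymmetric with `1 + G² ≥ 0`, and each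
antisymmetric `O` with `O² = -1` is the covariance matrix of some trial state. Let the reflection
split the sites into two halves, let `B ≥ 0` be the block of couplings crossing the plane, and write
`P`, `Q`, `R` for the blocks of `G`. With `T = √(1 + P²)` and `U = √(1 + R²)`, the matrices `(P, -T;
T, -P)` and `(-R, -U; U, R)` are trial covariances for the two Hamiltonians obtained by reflecting
one half of the system onto the other. Since `1 + G² ≥ 0` gives `T² ≥ Q Qᵀ` and `U² ≥ Qᵀ Q`, it also
gives `T + U + Q + Qᵀ ≥ 0`; taking the trace against `B` shows that the two reflected ground-state
energies average to at most the original one.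

Apply this to a minimizer `u`, after a gauge transformation making `u = 1` on every crossing bond:
the sign assignment obtained by reflecting its left half is again a minimizer. It is odd under
reflection, so along a reflected loop each bond and its mirror image contribute `1`, and the two
crossing bonds, traversed in opposite directions, contribute `-1`.
-/

section GroundState

variable {V : Type*} [NormedAddCommGroup V] [InnerProductSpace ℂ V] [FiniteDimensional ℂ V]
  {H : V →ₗ[ℂ] V}

theorem finite_setOf_hasEigenvalue_ofReal (H : V →ₗ[ℂ] V) :
    {t : ℝ | Module.End.HasEigenvalue H (t : ℂ)}.Finite :=
  (Module.End.finite_hasEigenvalue H).preimage Complex.ofReal_injective.injOn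

theorem hasEigenvalue_leastEig [Nontrivial V] (hH : H.IsSymmetric) :
    Module.End.HasEigenvalue H (leastEig H : ℂ) :=
  Set.Nonempty.csInf_mem (s := {t : ℝ | Module.End.HasEigenvalue H (t : ℂ)})
    ⟨_, hH.hasEigenvalue_iInf_of_finiteDimensional⟩ (finite_setOf_hasEigenvalue_ofReal H)

theorem exists_unit_groundState [Nontrivial V] (hH : H.IsSymmetric) :
    ∃ ψ : V, ‖ψ‖ = 1 ∧ H ψ = (leastEig H : ℂ) • ψ := by
  obtain ⟨x, hx⟩ := (hasEigenvalue_leastEig hH).exists_hasEigenvector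
  exact ⟨(‖x‖⁻¹ : ℂ) • x, norm_smul_inv_norm hx.2, by rw [map_smul, hx.apply_eq_smul, smul_comm]⟩

theorem leastEig_mul_norm_sq_le (hH : H.IsSymmetric) (ψ : V) :
    leastEig H * ‖ψ‖ ^ 2 ≤ (inner ℂ ψ (H ψ)).re := by
  let b := hH.eigenvectorBasis rfl
  have h_le (i) : leastEig H ≤ hH.eigenvalues rfl i :=
    csInf_le (finite_setOf_hasEigenvalue_ofReal H).bddBelow (hH.hasEigenvalue_eigenvalues rfl i)
  have h_term (i) : (inner ℂ ψ (b i) * inner ℂ (b i) (H ψ)).re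
      = hH.eigenvalues rfl i * ‖inner ℂ (b i) ψ‖ ^ 2 := by
    have h_prod : (inner ℂ ψ (b i) * inner ℂ (b i) ψ).re = ‖inner ℂ (b i) ψ‖ ^ 2 := by
      rw [← inner_conj_symm, ← Complex.normSq_eq_conj_mul_self, Complex.ofReal_re, Complex.sq_norm]
    rw [← hH, hH.apply_eigenvectorBasis, inner_smul_left, RCLike.conj_ofReal, mul_left_comm]
    exact (Complex.re_ofReal_mul _ _).trans (congrArg _ h_prod)
  calc leastEig H * ‖ψ‖ ^ 2
      = ∑ i, leastEig H * ‖inner ℂ (b i) ψ‖ ^ 2 := by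
        rw [← b.sum_sq_norm_inner_right ψ, Finset.mul_sum]
    _ ≤ ∑ i, hH.eigenvalues rfl i * ‖inner ℂ (b i) ψ‖ ^ 2 := by gcongr with i; exact h_le i
    _ = (inner ℂ ψ (H ψ)).re := by
        simp_rw [← h_term, ← Complex.re_sum, b.sum_inner_mul_inner]

end GroundState

section Majorana

open Matrix

variable {V : Type*} [NormedAddCommGroup V] [InnerProductSpace ℂ V]
  {n : Type*} {c : n → (V →ₗ[ℂ] V)}

/-- The quadratic Majorana Hamiltonian `(i/2) ∑ Aⱼₖ cⱼ cₖ` with coefficient matrix `A`. -/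
def quadraticHamiltonian [Fintype n] (A : Matrix n n ℝ) (c : n → (V →ₗ[ℂ] V)) : V →ₗ[ℂ] V :=
  (2 : ℂ)⁻¹ • ∑ i, ∑ j, (A i j : ℂ) • (Complex.I • (c i * c j))

/-- The covariance matrix of the vector `ψ`: the expectations `⟨ψ, i cⱼ cₖ ψ⟩` for `j ≠ k`, with
zero diagonal. -/
def covariance (c : n → (V →ₗ[ℂ] V)) (ψ : V) : Matrix n n ℝ :=
  of fun i j => (inner ℂ (c i ψ) (Complex.I • c j ψ)).re

theorem transpose_covariance (c : n → (V →ₗ[ℂ] V)) (ψ : V) :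
    (covariance c ψ)ᵀ = -covariance c ψ := by
  ext i j
  have h_symm : (inner ℂ (c j ψ) (c i ψ)).im = -(inner ℂ (c i ψ) (c j ψ)).im :=
    inner_im_symm (𝕜 := ℂ) _ _
  simp [covariance, h_symm]

theorem quadraticHamiltonian_submatrix {m : Type*} [Fintype m] [Fintype n] (e : m ≃ n)
    (A : Matrix n n ℝ) (c : n → (V →ₗ[ℂ] V)) :
    quadraticHamiltonian (A.submatrix e e) (c ∘ e) = quadraticHamiltonian A c := by
  simp only [quadraticHamiltonian, submatrix_apply, Function.comp_apply]
  congr 1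
  calc ∑ i, ∑ j, (A (e i) (e j) : ℂ) • (Complex.I • (c (e i) * c (e j)))
      = ∑ i, ∑ j, (A (e i) j : ℂ) • (Complex.I • (c (e i) * c j)) :=
        Finset.sum_congr rfl fun i _ =>
          e.sum_comp fun j => (A (e i) j : ℂ) • (Complex.I • (c (e i) * c j))
    _ = ∑ i, ∑ j, (A i j : ℂ) • (Complex.I • (c i * c j)) :=
        e.sum_comp fun i => ∑ j, (A i j : ℂ) • (Complex.I • (c i * c j))

theorem one_sub_I_smul_mul_transpose_self [Fintype n] [DecidableEq n] {O : Matrix n n ℝ}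
    (hO : Oᵀ = -O) (hOO : O * O = -1) :
    (1 - Complex.I • O.map Complex.ofRealHom) *
      (1 - Complex.I • O.map Complex.ofRealHom)ᵀ = 0 := by
  have hO_t : (O.map Complex.ofRealHom)ᵀ = -O.map Complex.ofRealHom := by
    rw [← transpose_map, hO]
    ext
    simp
  have hO_sq : O.map Complex.ofRealHom * O.map Complex.ofRealHom = -1 := by
    rw [← Matrix.map_mul, hOO]
    ext i j
    by_cases hij : i = j <;> simp [one_apply, hij]
  simp only [transpose_sub, transpose_one, transpose_smul, hO_t, smul_neg, sub_neg_eq_add,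
    sub_mul, mul_add, one_mul, mul_one, smul_mul_smul_comm, Complex.I_mul_I, hO_sq, neg_one_smul,
    neg_neg]
  abel

theorem exists_unit_common_kernel_of_antiCommute [Nontrivial V] [Finite n]
    {a : n → (V →ₗ[ℂ] V)} (ha : ∀ i j, AntiCommute (a i) (a j)) :
    ∃ ψ : V, ‖ψ‖ = 1 ∧ ∀ i, a i ψ = 0 := by
  have ha' (i j) (ψ : V) : a i (a j ψ) = -a j (a i ψ) := LinearMap.congr_fun (ha i j) ψ
  have h_sq (i) (ψ : V) : a i (a i ψ) = 0 := by
    simpa [eq_neg_iff_add_eq_zero, ← two_smul ℂ] using ha' i i ψ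
  have h_fin (s : Finset n) : ∃ ψ ≠ (0 : V), ∀ i ∈ s, a i ψ = 0 := by
    induction s using Finset.induction_on with
    | empty => simpa using exists_ne (0 : V)
    | insert k s _ ih =>
      obtain ⟨ψ, hψ0, hψ⟩ := ih
      by_cases hk : a k ψ = 0
      · exact ⟨ψ, hψ0, Finset.forall_mem_insert _ _ _ |>.2 ⟨hk, hψ⟩⟩
      · exact ⟨a k ψ, hk, Finset.forall_mem_insert _ _ _ |>.2
          ⟨h_sq k ψ, fun i hi => by rw [ha', hψ i hi, map_zero, neg_zero]⟩⟩
  have := Fintype.ofFinite n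
  obtain ⟨ψ, hψ0, hψ⟩ := h_fin Finset.univ
  exact ⟨(‖ψ‖⁻¹ : ℂ) • ψ, norm_smul_inv_norm hψ0,
    fun i => by rw [map_smul, hψ i (Finset.mem_univ i), smul_zero]⟩

variable [FiniteDimensional ℂ V]

namespace IsMajoranaFamily

theorem comp (hc : IsMajoranaFamily c) {m : Type*} {f : m → n} (hf : Function.Injective f) :
    IsMajoranaFamily (c ∘ f) :=
  ⟨fun i => hc.1 (f i), fun i j => by simpa [hf.eq_iff] using hc.2 (f i) (f j)⟩

theorem units_smul (hc : IsMajoranaFamily c) (g : n → ℤˣ) : IsMajoranaFamily (g • c) := by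
  refine ⟨fun i => ?_, fun i j => ?_⟩
  · rcases Int.units_eq_one_or (g i) with hgi | hgi <;> simp [hgi, hc.1 i, IsSelfAdjoint.neg]
  · rcases eq_or_ne i j with rfl | hij
    · rcases Int.units_eq_one_or (g i) with hgi | hgi <;> simpa [hgi] using hc.2 i i
    · have h := hc.2 i j
      rw [if_neg hij] at h ⊢
      rcases Int.units_eq_one_or (g i) with hgi | hgi <;>
        rcases Int.units_eq_one_or (g j) with hgj | hgj <;>
        simp [hgi, hgj, ← neg_add, h]

theorem isSymmetric (hc : IsMajoranaFamily c) (i : n) : (c i).IsSymmetric :=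
  (LinearMap.isSymmetric_iff_isSelfAdjoint _).2 (hc.1 i)

theorem re_inner_apply_apply [DecidableEq n] (hc : IsMajoranaFamily c) (i j : n) (ψ : V) :
    (inner ℂ (c i ψ) (c j ψ)).re = if i = j then ‖ψ‖ ^ 2 else 0 := by
  have h_comm := congrArg (fun f : V →ₗ[ℂ] V => (inner ℂ ψ (f ψ)).re) (hc.2 i j)
  have h_swap : (inner ℂ (c j ψ) (c i ψ)).re = (inner ℂ (c i ψ) (c j ψ)).re :=
    inner_re_symm (𝕜 := ℂ) _ _
  simp only [LinearMap.add_apply, Module.End.mul_apply, inner_add_right, Complex.add_re,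
    ← hc.isSymmetric _ ψ, h_swap] at h_comm
  split_ifs at h_comm ⊢
  · have h_norm : (inner ℂ ψ ψ).re = ‖ψ‖ ^ 2 := inner_self_eq_norm_sq (𝕜 := ℂ) ψ
    have h_two : (inner ℂ ψ (((2 : ℂ) • (1 : V →ₗ[ℂ] V)) ψ)).re = 2 * ‖ψ‖ ^ 2 := by
      rw [LinearMap.smul_apply, Module.End.one_apply, inner_smul_right, ← h_norm]
      simp [-inner_self_eq_norm_sq_to_K]
    linarith
  · rw [LinearMap.zero_apply, inner_zero_right, Complex.zero_re] at h_comm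
    linarith

variable [Fintype n] {A : Matrix n n ℝ}

theorem isSymmetric_quadraticHamiltonian (hc : IsMajoranaFamily c) (hA : Aᵀ = -A) :
    (quadraticHamiltonian A c).IsSymmetric := by
  have hA' (i j) : A j i = -A i j := congrFun₂ hA i j
  rw [LinearMap.isSymmetric_iff_isSelfAdjoint, IsSelfAdjoint]
  simp only [quadraticHamiltonian, star_smul, star_sum, star_mul, (hc.1 _).star_eq]
  rw [Finset.sum_comm]
  congr 1
  · simp
  · refine Finset.sum_congr rfl fun i _ => Finset.sum_congr rfl fun j _ => ?_
    rw [hA' i j]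
    simp

theorem re_inner_quadraticHamiltonian (hc : IsMajoranaFamily c) (A : Matrix n n ℝ) (ψ : V) :
    (inner ℂ ψ (quadraticHamiltonian A c ψ)).re = -trace (A * covariance c ψ) / 2 := by
  have h_term (i j) : (inner ℂ ψ (((A i j : ℂ) • (Complex.I • (c i * c j))) ψ)).re
      = A i j * covariance c ψ i j := by
    rw [LinearMap.smul_apply, inner_smul_right, Complex.re_ofReal_mul, LinearMap.smul_apply,
      Module.End.mul_apply, ← map_smul, ← hc.isSymmetric]
    rfl
  have h_trace : -trace (A * covariance c ψ) = ∑ i, ∑ j, A i j * covariance c ψ i j := by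
    rw [← trace_neg, ← mul_neg, ← transpose_covariance]
    rfl
  rw [h_trace, quadraticHamiltonian, LinearMap.smul_apply, inner_smul_right,
    show (2 : ℂ)⁻¹ = ((2⁻¹ : ℝ) : ℂ) by norm_num, Complex.re_ofReal_mul, inv_mul_eq_div]
  simp only [LinearMap.sum_apply, inner_sum, Complex.re_sum, h_term]

theorem posSemidef_one_add_covariance_mul_self [DecidableEq n] (hc : IsMajoranaFamily c) {ψ : V}
    (hψ : ‖ψ‖ = 1) : (1 + covariance c ψ * covariance c ψ).PosSemidef := by
  let : InnerProductSpace ℝ V := InnerProductSpace.complexToReal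
  have h_orth (i j) : (inner ℂ (c i ψ) (c j ψ)).re = (1 : Matrix n n ℝ) i j := by
    simp [hc.re_inner_apply_apply, hψ, one_apply]
  have h_gram : gram ℝ (Sum.elim (fun i => c i ψ) (fun i => Complex.I • c i ψ) : n ⊕ n → V) =
      fromBlocks 1 (covariance c ψ) (covariance c ψ)ᴴ 1 := by
    ext (i | i) (j | j)
    · exact h_orth i j
    · rfl
    · exact real_inner_comm (c j ψ) (Complex.I • c i ψ)
    · simpa [gram_apply, real_inner_eq_re_inner ℂ, inner_smul_left, inner_smul_right, ← mul_assoc]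
        using h_orth i j
  have : Invertible (1 : Matrix n n ℝ) := invertibleOne
  have h_schur := (PosDef.fromBlocks₁₁ (covariance c ψ) 1 PosDef.one).1
    (h_gram ▸ posSemidef_gram ℝ _)
  simpa [conjTranspose_eq_transpose_of_trivial, transpose_covariance] using h_schur

theorem linearCombination_anticomm (hc : IsMajoranaFamily c) (x y : n → ℂ) :
    Fintype.linearCombination ℂ c x * Fintype.linearCombination ℂ c y +
      Fintype.linearCombination ℂ c y * Fintype.linearCombination ℂ c x =
      (2 * (x ⬝ᵥ y)) • (1 : V →ₗ[ℂ] V) := by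
  simp only [Fintype.linearCombination_apply, Finset.sum_mul_sum]
  rw [Finset.sum_comm (f := fun i j => y i • c i * x j • c j), ← Finset.sum_add_distrib]
  simp only [← Finset.sum_add_distrib, smul_mul_smul_comm, mul_comm (y _), ← smul_add, hc.2]
  simp [dotProduct, Finset.mul_sum, Finset.sum_smul, smul_smul, mul_comm]

-- With `M = 1 - iO`, the isotropy `M Mᵀ = 1 + O² = 0` makes the operators `∑ₖ Mⱼₖ cₖ` anticommute;
-- a vector killed by all of them satisfies `cⱼ ψ = i ∑ₖ Oⱼₖ cₖ ψ`.
theorem exists_covariance_eq [Nontrivial V] [DecidableEq n] (hc : IsMajoranaFamily c)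
    {O : Matrix n n ℝ} (hO : Oᵀ = -O) (hOO : O * O = -1) :
    ∃ ψ : V, ‖ψ‖ = 1 ∧ covariance c ψ = O := by
  let M : Matrix n n ℂ := 1 - Complex.I • O.map Complex.ofRealHom
  have hM : M * Mᵀ = 0 := one_sub_I_smul_mul_transpose_self hO hOO
  have h_anti (i j) : AntiCommute (Fintype.linearCombination ℂ c (M i))
      (Fintype.linearCombination ℂ c (M j)) := by
    have h_zero : M i ⬝ᵥ M j = 0 := congrFun₂ hM i j
    rw [AntiCommute, ← add_eq_zero_iff_eq_neg, hc.linearCombination_anticomm, h_zero, mul_zero,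
      zero_smul]
  obtain ⟨ψ, hψ, hker⟩ := exists_unit_common_kernel_of_antiCommute h_anti
  have h_apply (j) : c j ψ = Complex.I • ∑ k, (O j k : ℂ) • c k ψ := by
    have h := hker j
    simpa [M, Fintype.linearCombination_apply, one_apply, sub_smul, Finset.smul_sum, mul_smul,
      sub_eq_zero] using h
  refine ⟨ψ, hψ, ?_⟩
  ext i j
  have h_swap : O j i = -O i j := congrFun₂ hO i j
  have h_term (k) : (inner ℂ (c i ψ) ((O j k : ℂ) • c k ψ)).re =
      O j k * if i = k then 1 else 0 := by
    rw [inner_smul_right, Complex.re_ofReal_mul, hc.re_inner_apply_apply, hψ, one_pow]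
  rw [covariance, of_apply, h_apply j, smul_smul, Complex.I_mul_I, neg_one_smul, inner_neg_right,
    Complex.neg_re, inner_sum, Complex.re_sum, Finset.sum_congr rfl fun k _ => h_term k]
  simp [h_swap]

theorem leastEig_quadraticHamiltonian_le [Nontrivial V] [DecidableEq n]
    (hc : IsMajoranaFamily c) {A O : Matrix n n ℝ} (hA : Aᵀ = -A) (hO : Oᵀ = -O)
    (hOO : O * O = -1) :
    leastEig (quadraticHamiltonian A c) ≤ -trace (A * O) / 2 := by
  obtain ⟨ψ, hψ, rfl⟩ := hc.exists_covariance_eq hO hOO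
  simpa [hψ, hc.re_inner_quadraticHamiltonian] using
    leastEig_mul_norm_sq_le (hc.isSymmetric_quadraticHamiltonian hA) ψ

theorem exists_leastEig_quadraticHamiltonian_eq [Nontrivial V] [DecidableEq n]
    (hc : IsMajoranaFamily c) {A : Matrix n n ℝ} (hA : Aᵀ = -A) :
    ∃ G : Matrix n n ℝ, Gᵀ = -G ∧ (1 + G * G).PosSemidef ∧
      leastEig (quadraticHamiltonian A c) = -trace (A * G) / 2 := by
  obtain ⟨ψ, hψ, hHψ⟩ := exists_unit_groundState (hc.isSymmetric_quadraticHamiltonian hA)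
  refine ⟨covariance c ψ, transpose_covariance c ψ,
    hc.posSemidef_one_add_covariance_mul_self hψ, ?_⟩
  rw [← hc.re_inner_quadraticHamiltonian, hHψ, inner_smul_right, inner_self_eq_norm_sq_to_K, hψ]
  simp

end IsMajoranaFamily

end Majorana

section PosSemidef

open Matrix
open scoped ComplexOrder

variable {n m 𝕜 : Type*} [RCLike 𝕜]

theorem posSemidef_fromBlocks_zero_zero [Finite n] [Finite m] {T : Matrix n n 𝕜}
    {U : Matrix m m 𝕜} (hT : T.PosSemidef) (hU : U.PosSemidef) :
    (fromBlocks T 0 0 U).PosSemidef := by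
  have := Fintype.ofFinite n
  have := Fintype.ofFinite m
  refine .of_dotProduct_mulVec_nonneg
    (isHermitian_fromBlocks_iff.2 ⟨hT.1, conjTranspose_zero, conjTranspose_zero, hU.1⟩) fun x => ?_
  have h_star : star x = Sum.elim (star (x ∘ Sum.inl)) (star (x ∘ Sum.inr)) := by
    ext (i | i) <;> rfl
  rw [fromBlocks_mulVec, h_star, sumElim_dotProduct_sumElim]
  simpa only [zero_mulVec, add_zero, zero_add] using
    add_nonneg (hT.dotProduct_mulVec_nonneg _) (hU.dotProduct_mulVec_nonneg _)

variable [Fintype n]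

theorem trace_mul_nonneg_of_posSemidef {B C : Matrix n n 𝕜} (hB : B.PosSemidef)
    (hC : C.PosSemidef) : 0 ≤ trace (B * C) := by
  open scoped MatrixOrder in
  obtain ⟨R, rfl⟩ := CStarAlgebra.nonneg_iff_eq_star_mul_self.1 hB.nonneg
  rw [mul_assoc, trace_mul_comm, star_eq_conjTranspose]
  exact (hC.mul_mul_conjTranspose_same R).trace_nonneg

-- On a unit eigenvector `y` of `T - K` with eigenvalue `μ < 0`, the form `T² - K²` would take the
-- value `2 μ ⟨y, T y⟩ - μ² < 0`.
theorem posSemidef_sub_of_posSemidef_mul_self_sub {T K : Matrix n n 𝕜} (hT : T.PosSemidef)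
    (hK : K.IsHermitian) (h : (T * T - K * K).PosSemidef) : (T - K).PosSemidef := by
  have hD : (T - K).IsHermitian := hT.1.sub hK
  rw [hD.posSemidef_iff_eigenvalues_nonneg]
  intro k
  set μ := hD.eigenvalues k
  set y : n → 𝕜 := (hD.eigenvectorBasis k).ofLp
  have hy : (T - K) *ᵥ y = (μ : 𝕜) • y := by
    rw [← RCLike.real_smul_eq_coe_smul (K := 𝕜)]
    exact hD.mulVec_eigenvectorBasis k
  have hy_left : star y ᵥ* (T - K) = (μ : 𝕜) • star y := by
    rw [← hD.eq, ← star_mulVec, hy, star_smul, RCLike.star_def, RCLike.conj_ofReal]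
  have hy_unit : star y ⬝ᵥ y = 1 := by
    rw [dotProduct_comm, ← EuclideanSpace.inner_eq_star_dotProduct]
    exact inner_self_eq_one_of_norm_eq_one (hD.eigenvectorBasis.orthonormal.1 k)
  have h_decomp : T * T - K * K = (T - K) * T + K * (T - K) := by noncomm_ring
  have h_val : star y ⬝ᵥ (T * T - K * K) *ᵥ y = (μ : 𝕜) * (2 * (star y ⬝ᵥ T *ᵥ y) - μ) := by
    have hKy : K *ᵥ y = T *ᵥ y - (μ : 𝕜) • y := by rw [← hy, sub_mulVec, sub_sub_cancel]
    rw [h_decomp, add_mulVec, dotProduct_add, ← mulVec_mulVec, ← mulVec_mulVec, hy,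
      dotProduct_mulVec _ (T - K), hy_left, mulVec_smul, hKy]
    simp only [smul_dotProduct, dotProduct_smul, dotProduct_sub, hy_unit, smul_eq_mul]
    ring
  have hT_nonneg : 0 ≤ RCLike.re (star y ⬝ᵥ T *ᵥ y) :=
    (RCLike.nonneg_iff.1 (hT.dotProduct_mulVec_nonneg y)).1
  have h_nonneg : 0 ≤ μ * (2 * RCLike.re (star y ⬝ᵥ T *ᵥ y) - μ) := by
    have := (RCLike.nonneg_iff.1 (h_val ▸ h.dotProduct_mulVec_nonneg y)).1
    simpa [RCLike.re_ofReal_mul] using this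
  change 0 ≤ μ
  by_contra! h_neg
  nlinarith

theorem exists_posSemidef_mul_self_eq_one_add_mul_self [DecidableEq n] {P : Matrix n n 𝕜}
    (h : (1 + P * P).PosSemidef) :
    ∃ T : Matrix n n 𝕜, T.PosSemidef ∧ T * T = 1 + P * P ∧ T * P = P * T := by
  open scoped MatrixOrder in
  have h_comm : Commute (1 + P * P) P := by simp [Commute, SemiconjBy, add_mul, mul_add, mul_assoc]
  refine ⟨CFC.sqrt (1 + P * P), (CFC.sqrt_nonneg _).posSemidef,
    CFC.sqrt_mul_sqrt_self _ h.nonneg, ?_⟩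
  rw [CFC.sqrt_eq_cfc]
  exact (h_comm.cfc_nnreal _).eq

theorem posSemidef_add_add_add_conjTranspose {T U Q : Matrix n n 𝕜} (hT : T.PosSemidef)
    (hU : U.PosSemidef) (hTQ : (T * T - Q * Qᴴ).PosSemidef) (hUQ : (U * U - Qᴴ * Q).PosSemidef) :
    (T + U + Q + Qᴴ).PosSemidef := by
  have h_block : (fromBlocks T 0 0 U - fromBlocks 0 (-Q) (-Qᴴ) 0).PosSemidef := by
    refine posSemidef_sub_of_posSemidef_mul_self_sub (posSemidef_fromBlocks_zero_zero hT hU)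
      (isHermitian_fromBlocks_iff.2 (by simp)) ?_
    simpa [fromBlocks_multiply, sub_eq_add_neg, fromBlocks_neg, fromBlocks_add] using
      posSemidef_fromBlocks_zero_zero hTQ hUQ
  have h_sum := h_block.conjTranspose_mul_mul_same (fromRows 1 1 : Matrix (n ⊕ n) n 𝕜)
  convert h_sum using 1
  simp only [conjTranspose_fromRows_eq_fromCols_conjTranspose, conjTranspose_one, sub_eq_add_neg,
    fromBlocks_neg, fromBlocks_add, fromCols_mul_fromBlocks, fromCols_mul_fromRows, one_mul,
    mul_one, neg_neg, neg_zero, add_zero, zero_add]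
  abel

end PosSemidef

section ReflectionPositivity

open Matrix

theorem trace_fromBlocks_eq_add {m n R : Type*} [Fintype m] [Fintype n] [AddCommMonoid R]
    (A : Matrix m m R) (B : Matrix m n R) (C : Matrix n m R) (D : Matrix n n R) :
    trace (fromBlocks A B C D) = trace A + trace D := by
  simp [trace]

theorem exists_fromBlocks_eq_of_transpose_eq_neg {m n : Type*} {G : Matrix (m ⊕ n) (m ⊕ n) ℝ}
    (hG : Gᵀ = -G) :
    ∃ (P : Matrix m m ℝ) (Q : Matrix m n ℝ) (R : Matrix n n ℝ),
      Pᵀ = -P ∧ Rᵀ = -R ∧ G = fromBlocks P Q (-Qᵀ) R := by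
  rw [← fromBlocks_toBlocks G, fromBlocks_transpose, fromBlocks_neg, fromBlocks_inj] at hG
  obtain ⟨hP, hQ, -, hR⟩ := hG
  refine ⟨G.toBlocks₁₁, G.toBlocks₁₂, G.toBlocks₂₂, hP, hR, ?_⟩
  rw [← transpose_neg, ← hQ, transpose_transpose, fromBlocks_toBlocks]

variable {V : Type*} [NormedAddCommGroup V] [InnerProductSpace ℂ V] [FiniteDimensional ℂ V]
  [Nontrivial V] {S : Type*} [Fintype S] {c : S ⊕ S → (V →ₗ[ℂ] V)}

theorem leastEig_fromBlocks_mirror_le [DecidableEq S] (hc : IsMajoranaFamily c)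
    {A B P T : Matrix S S ℝ} (hA : Aᵀ = -A) (hB : Bᵀ = B) (hP : Pᵀ = -P) (hT : Tᵀ = T)
    (hTT : T * T = 1 + P * P) (hTP : T * P = P * T) :
    leastEig (quadraticHamiltonian (fromBlocks A B (-B) (-A)) c) ≤
      -trace (A * P) - trace (B * T) := by
  have h_anti : (fromBlocks A B (-B) (-A))ᵀ = -fromBlocks A B (-B) (-A) := by
    simp [fromBlocks_transpose, fromBlocks_neg, hA, hB]
  have hO_anti : (fromBlocks P (-T) T (-P))ᵀ = -fromBlocks P (-T) T (-P) := by
    simp [fromBlocks_transpose, fromBlocks_neg, hP, hT]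
  have hO_sq : fromBlocks P (-T) T (-P) * fromBlocks P (-T) T (-P) = -1 := by
    simp [fromBlocks_multiply, ← fromBlocks_one, fromBlocks_neg, hTT, hTP]
  calc _ ≤ -trace (fromBlocks A B (-B) (-A) * fromBlocks P (-T) T (-P)) / 2 :=
        hc.leastEig_quadraticHamiltonian_le h_anti hO_anti hO_sq
    _ = -trace (A * P) - trace (B * T) := by
        simp only [fromBlocks_multiply, trace_fromBlocks_eq_add, trace_add, neg_mul_neg]
        ring

theorem leastEig_fromBlocks_mirror_add_le (hc : IsMajoranaFamily c) {A₁ A₂ B : Matrix S S ℝ}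
    (hA₁ : A₁ᵀ = -A₁) (hA₂ : A₂ᵀ = -A₂) (hB : B.PosSemidef) :
    leastEig (quadraticHamiltonian (fromBlocks A₁ B (-B) (-A₁)) c) +
        leastEig (quadraticHamiltonian (fromBlocks (-A₂) B (-B) A₂) c) ≤
      2 * leastEig (quadraticHamiltonian (fromBlocks A₁ B (-B) A₂) c) := by
  have hB_symm : Bᵀ = B := hB.1
  have h_anti : (fromBlocks A₁ B (-B) A₂)ᵀ = -fromBlocks A₁ B (-B) A₂ := by
    simp [fromBlocks_transpose, fromBlocks_neg, hA₁, hA₂, hB_symm]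
  obtain ⟨G, hG, hGG, h_ground⟩ := hc.exists_leastEig_quadraticHamiltonian_eq h_anti
  obtain ⟨P, Q, R, hP, hR, rfl⟩ := exists_fromBlocks_eq_of_transpose_eq_neg hG
  have h_sq : 1 + fromBlocks P Q (-Qᵀ) R * fromBlocks P Q (-Qᵀ) R =
      fromBlocks (1 + P * P - Q * Qᵀ) (P * Q + Q * R) (-(Qᵀ * P) - R * Qᵀ)
        (1 + R * R - Qᵀ * Q) := by
    rw [← fromBlocks_one, fromBlocks_multiply, fromBlocks_add, fromBlocks_inj]
    exact ⟨by noncomm_ring, zero_add _, by noncomm_ring, by noncomm_ring⟩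
  have h_contr₁ : (1 + P * P - Q * Qᵀ).PosSemidef := (h_sq ▸ hGG).submatrix Sum.inl
  have h_contr₂ : (1 + R * R - Qᵀ * Q).PosSemidef := (h_sq ▸ hGG).submatrix Sum.inr
  obtain ⟨T, hT, hTT, hTP⟩ := exists_posSemidef_mul_self_eq_one_add_mul_self (P := P)
    (by simpa using h_contr₁.add (posSemidef_self_mul_conjTranspose Q))
  obtain ⟨U, hU, hUU, hUR⟩ := exists_posSemidef_mul_self_eq_one_add_mul_self (P := R)
    (by simpa using h_contr₂.add (posSemidef_conjTranspose_mul_self Q))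
  have h₁ := leastEig_fromBlocks_mirror_le hc (T := T) hA₁ hB_symm hP hT.1 hTT hTP
  have h₂ := leastEig_fromBlocks_mirror_le hc (A := -A₂) (P := -R) (T := U) (by simp [hA₂]) hB_symm
    (by simp [hR]) hU.1 (by simpa using hUU) (by simpa using hUR)
  have h_cross : 0 ≤ trace (B * (T + U + Q + Qᵀ)) :=
    trace_mul_nonneg_of_posSemidef hB
      (posSemidef_add_add_add_conjTranspose hT hU (hTT ▸ h_contr₁) (hUU ▸ h_contr₂))
  rw [h_ground]
  simp only [fromBlocks_multiply, trace_fromBlocks_eq_add, trace_add, mul_add, neg_mul, mul_neg,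
    trace_neg, neg_neg] at h₁ h₂ h_cross ⊢
  linarith

end ReflectionPositivity

section ReflectOnto

open Matrix

variable {n : Type*} {θ : n → n} {p : n → Prop}

/-- The extension to all pairs, by the odd reflection `f (θ i) (θ j) = -f i j`, of the values of `f`
at the pairs with at least one entry in the half `p` of the index set. -/
def reflectOnto {R : Type*} [Neg R] (θ : n → n) (p : n → Prop) (f : n → n → R) : n → n → R :=
  fun i j => if p i ∨ p j then f i j else -f (θ i) (θ j)

theorem exists_equiv_subtype_sum_subtype (hθ : θ.Involutive) (hp : ∀ i, p (θ i) ↔ ¬p i) :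
    ∃ e : {i // p i} ⊕ {i // p i} ≃ n, (∀ i, e (.inl i) = i) ∧ ∀ i, e (.inr i) = θ i :=
  ⟨(Equiv.sumCongr (Equiv.refl _)
      ((hθ.toPerm θ).subtypeEquiv fun i => (not_iff_comm.1 (hp i).symm).symm)).trans
      (Equiv.sumCompl p), fun _ => rfl, fun _ => rfl⟩

variable {V : Type*} [NormedAddCommGroup V] [InnerProductSpace ℂ V] [FiniteDimensional ℂ V]
  [Nontrivial V] [Fintype n] {c : n → (V →ₗ[ℂ] V)}

theorem leastEig_reflectOnto_add_le (hc : IsMajoranaFamily c) (hθ : θ.Involutive)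
    (hp : ∀ i, p (θ i) ↔ ¬p i) {A : Matrix n n ℝ} (hA : Aᵀ = -A)
    (h_cross : (of fun i j : {i // p i} => A i (θ j)).PosSemidef) :
    leastEig (quadraticHamiltonian (of (reflectOnto θ p A)) c) +
        leastEig (quadraticHamiltonian (of (reflectOnto θ (¬p ·) A)) c) ≤
      2 * leastEig (quadraticHamiltonian A c) := by
  obtain ⟨e, he_inl, he_inr⟩ := exists_equiv_subtype_sum_subtype hθ hp
  have hA' (i j) : A j i = -A i j := congrFun₂ hA i j
  set B : Matrix {i // p i} {i // p i} ℝ := of fun i j => A i (θ j)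
  let A₁ : Matrix {i // p i} {i // p i} ℝ := of fun i j => A i j
  let A₂ : Matrix {i // p i} {i // p i} ℝ := of fun i j => A (θ i) (θ j)
  have hB (i j : {i // p i}) : A (θ i) j = -A i (θ j) := by
    rw [hA' j (θ i)]
    exact congrArg _ (congrFun₂ h_cross.1 i j)
  have h_blocks : A.submatrix e e = fromBlocks A₁ B (-B) A₂ := by
    ext (i | i) (j | j) <;> simp [A₁, A₂, B, he_inl, he_inr, hB]
  have h_left : (of (reflectOnto θ p A)).submatrix e e = fromBlocks A₁ B (-B) (-A₁) := by
    ext (i | i) (j | j) <;>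
      simp [reflectOnto, A₁, B, he_inl, he_inr, hB, hp, hθ _, Subtype.prop]
  have h_right : (of (reflectOnto θ (¬p ·) A)).submatrix e e = fromBlocks (-A₂) B (-B) A₂ := by
    ext (i | i) (j | j) <;>
      simp [reflectOnto, A₂, B, he_inl, he_inr, hB, hp, Subtype.prop]
  rw [← quadraticHamiltonian_submatrix e A,
    ← quadraticHamiltonian_submatrix e (of (reflectOnto θ p A)),
    ← quadraticHamiltonian_submatrix e (of (reflectOnto θ (¬p ·) A)), h_blocks, h_left, h_right]
  exact leastEig_fromBlocks_mirror_add_le (hc.comp e.injective)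
    (Matrix.ext fun i j => hA' i j) (Matrix.ext fun i j => hA' (θ i) (θ j)) h_cross

end ReflectOnto

section LatticeReflection

variable {d : ℕ} {a : Fin d} {s : ℤ} {i j : Fin d → ℤ}

theorem IsNN.symm (h : IsNN i j) : IsNN j i :=
  (Finset.sum_congr rfl fun k _ => by omega).trans h

theorem IsNN.ne (h : IsNN i j) : i ≠ j := by
  rintro rfl
  simp [IsNN] at h

/-- The reflection of `ℤ^d` in the hyperplane `2 xₐ = s`. -/
def latticeReflection (a : Fin d) (s : ℤ) (x : Fin d → ℤ) : Fin d → ℤ :=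
  Function.update x a (s - x a)

/-- `x` lies on the side `2 xₐ < s` of the hyperplane `2 xₐ = s`. -/
def IsLeft (a : Fin d) (s : ℤ) (x : Fin d → ℤ) : Prop := 2 * x a < s

theorem latticeReflection_involutive (a : Fin d) (s : ℤ) :
    (latticeReflection a s).Involutive := fun x => by
  simp [latticeReflection]

theorem isLeft_latticeReflection (hs : Odd s) (x : Fin d → ℤ) :
    IsLeft a s (latticeReflection a s x) ↔ ¬IsLeft a s x := by
  simp only [IsLeft, latticeReflection, Function.update_self]
  grind

theorem isNN_latticeReflection_iff :
    IsNN (latticeReflection a s i) (latticeReflection a s j) ↔ IsNN i j := by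
  refine Eq.congr_left (Finset.sum_congr rfl fun k _ => ?_)
  rcases eq_or_ne k a with rfl | hk
  · simp only [latticeReflection, Function.update_self]
    omega
  · simp [latticeReflection, hk]

theorem IsNN.eq_latticeReflection (hs : Odd s) (h : IsNN i j) (hi : IsLeft a s i)
    (hj : ¬IsLeft a s j) : j = latticeReflection a s i := by
  obtain ⟨m, rfl⟩ := hs
  simp only [IsLeft, not_lt] at hi hj
  have h_split : (i a - j a).natAbs + ∑ k ∈ Finset.univ.erase a, (i k - j k).natAbs = 1 :=
    (Finset.add_sum_erase _ _ (Finset.mem_univ a)).trans h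
  have h_rest : ∑ k ∈ Finset.univ.erase a, (i k - j k).natAbs = 0 := by omega
  ext k
  rcases eq_or_ne k a with rfl | hk
  · simp only [latticeReflection, Function.update_self]
    omega
  · have h_zero := Finset.sum_eq_zero_iff.1 h_rest k (Finset.mem_erase.2 ⟨hk, Finset.mem_univ k⟩)
    simp only [latticeReflection, Function.update_of_ne hk]
    omega

end LatticeReflection

section SignAssignment

open Matrix

variable {d : ℕ} {Λ : Finset (Fin d → ℤ)} {J : (Fin d → ℤ) → (Fin d → ℤ) → ℝ}
  {u : (Fin d → ℤ) → (Fin d → ℤ) → ℤ}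

/-- The coefficient matrix `Jᵢⱼ uᵢⱼ` of `cubicH`, supported on the nearest-neighbor pairs of `Λ`. -/
def bondMatrix (Λ : Finset (Fin d → ℤ)) (J : (Fin d → ℤ) → (Fin d → ℤ) → ℝ)
    (u : (Fin d → ℤ) → (Fin d → ℤ) → ℤ) : Matrix Λ Λ ℝ :=
  of fun i j => if IsNN (i : Fin d → ℤ) j then J i j * u i j else 0

theorem transpose_bondMatrix (hJ : ∀ i ∈ Λ, ∀ j ∈ Λ, IsNN i j → J i j = J j i)
    (hu : IsSignAssignment Λ u) : (bondMatrix Λ J u)ᵀ = -bondMatrix Λ J u := by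
  ext i j
  by_cases hij : IsNN (i : Fin d → ℤ) j
  · simp [bondMatrix, hij, hij.symm, hJ i i.2 j j.2 hij, (hu i i.2 j j.2 hij).2]
  · simp [bondMatrix, hij, mt IsNN.symm hij]

theorem exists_isSignAssignment (Λ : Finset (Fin d → ℤ)) : ∃ u, IsSignAssignment Λ u := by
  refine ⟨fun i j => if WellOrderingRel i j then 1 else -1, fun i _ j _ hij => ?_⟩
  rcases trichotomous_of WellOrderingRel i j with h | h | h
  · simp [h, asymm h]
  · exact absurd h hij.ne
  · simp [h, asymm h]

variable {V : Type*} [NormedAddCommGroup V] [InnerProductSpace ℂ V] [FiniteDimensional ℂ V]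
  {c : (Fin d → ℤ) → (V →ₗ[ℂ] V)}

theorem cubicH_eq_quadraticHamiltonian (Λ : Finset (Fin d → ℤ))
    (J : (Fin d → ℤ) → (Fin d → ℤ) → ℝ) (u : (Fin d → ℤ) → (Fin d → ℤ) → ℤ)
    (c : (Fin d → ℤ) → (V →ₗ[ℂ] V)) :
    cubicH Λ J u c = quadraticHamiltonian (bondMatrix Λ J u) fun i : Λ => c i := by
  rw [cubicH, quadraticHamiltonian, ← Finset.sum_coe_sort Λ]
  congr 1
  refine Finset.sum_congr rfl fun i _ => ?_
  rw [← Finset.sum_coe_sort Λ]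
  refine Finset.sum_congr rfl fun j _ => ?_
  by_cases hij : IsNN (i : Fin d → ℤ) j <;> simp [bondMatrix, hij]

theorem exists_isSignAssignment_minimizing_leastEig (Λ : Finset (Fin d → ℤ))
    (J : (Fin d → ℤ) → (Fin d → ℤ) → ℝ) (c : (Fin d → ℤ) → (V →ₗ[ℂ] V)) :
    ∃ u, IsSignAssignment Λ u ∧
      ∀ u', IsSignAssignment Λ u' → leastEig (cubicH Λ J u c) ≤ leastEig (cubicH Λ J u' c) := by
  have h_fin : (bondMatrix Λ J '' {u | IsSignAssignment Λ u}).Finite := by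
    refine (Set.Finite.pi' fun i : Λ => Set.Finite.pi' fun j : Λ =>
      Set.toFinite ({J i j, -J i j, 0} : Set ℝ)).subset ?_
    rintro _ ⟨u, hu, rfl⟩ i j
    by_cases hij : IsNN (i : Fin d → ℤ) j
    · rcases (hu i i.2 j j.2 hij).1 with h | h <;> simp [bondMatrix, hij, h]
    · simp [bondMatrix, hij]
  obtain ⟨_, ⟨u, hu, rfl⟩, h_min⟩ := Set.exists_min_image _
    (fun A => leastEig (quadraticHamiltonian A fun i : Λ => c i)) h_fin
    ((exists_isSignAssignment Λ).elim fun u hu => ⟨_, u, hu, rfl⟩)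
  simp only [cubicH_eq_quadraticHamiltonian]
  exact ⟨u, hu, fun u' hu' => h_min _ ⟨u', hu', rfl⟩⟩

/-- The gauge transformation of `u` by the signs `g`: `u` conjugated by the diagonal matrix `g`. -/
def gaugeTransform (g : (Fin d → ℤ) → ℤˣ) (u : (Fin d → ℤ) → (Fin d → ℤ) → ℤ) :
    (Fin d → ℤ) → (Fin d → ℤ) → ℤ :=
  fun i j => g i * u i j * g j

theorem gaugeTransform_gaugeTransform (g : (Fin d → ℤ) → ℤˣ)
    (u : (Fin d → ℤ) → (Fin d → ℤ) → ℤ) : gaugeTransform g (gaugeTransform g u) = u := by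
  ext i j
  simp only [gaugeTransform]
  linear_combination u i j * (g j * g j) * Int.units_coe_mul_self (g i) +
    u i j * Int.units_coe_mul_self (g j)

theorem IsSignAssignment.gaugeTransform (hu : IsSignAssignment Λ u) (g : (Fin d → ℤ) → ℤˣ) :
    IsSignAssignment Λ (gaugeTransform g u) := by
  intro i hi j hj hij
  obtain ⟨h_sign, h_anti⟩ := hu i hi j hj hij
  constructor
  · rcases h_sign with h | h <;> rcases Int.units_eq_one_or (g i) with hgi | hgi <;>
      rcases Int.units_eq_one_or (g j) with hgj | hgj <;>
      simp [_root_.gaugeTransform, h, hgi, hgj]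
  · rw [_root_.gaugeTransform, _root_.gaugeTransform, h_anti]
    ring

theorem cubicH_gaugeTransform (Λ : Finset (Fin d → ℤ)) (J : (Fin d → ℤ) → (Fin d → ℤ) → ℝ)
    (g : (Fin d → ℤ) → ℤˣ) (u : (Fin d → ℤ) → (Fin d → ℤ) → ℤ) (c : (Fin d → ℤ) → (V →ₗ[ℂ] V)) :
    cubicH Λ J (gaugeTransform g u) c = cubicH Λ J u (g • c) := by
  rw [cubicH, cubicH]
  congr! 4 with i _ j _
  rcases Int.units_eq_one_or (g i) with hgi | hgi <;>
    rcases Int.units_eq_one_or (g j) with hgj | hgj <;> simp [gaugeTransform, hgi, hgj]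

end SignAssignment

section LatticeReflectionPositivity

open Matrix

variable {d : ℕ} {Λ : Finset (Fin d → ℤ)} {a : Fin d} {s : ℤ}
  {J : (Fin d → ℤ) → (Fin d → ℤ) → ℝ} {u : (Fin d → ℤ) → (Fin d → ℤ) → ℤ}

/-- Couplings on the bonds of `Λ` that are symmetric, invariant under the reflection in `2 xₐ = s`,
and nonnegative on the bonds crossing that hyperplane. -/
structure IsReflectionPositive (Λ : Finset (Fin d → ℤ)) (a : Fin d) (s : ℤ)
    (J : (Fin d → ℤ) → (Fin d → ℤ) → ℝ) : Prop where
  symm : ∀ i ∈ Λ, ∀ j ∈ Λ, IsNN i j → J i j = J j i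
  map_reflection : ∀ i ∈ Λ, ∀ j ∈ Λ, IsNN i j →
    J (latticeReflection a s i) (latticeReflection a s j) = J i j
  crossing_nonneg : ∀ i ∈ Λ, IsLeft a s i → IsNN i (latticeReflection a s i) →
    0 ≤ J i (latticeReflection a s i)

/-- Sign assignments that are odd under the reflection in `2 xₐ = s` and equal to `1` on the bonds
crossing that hyperplane from left to right. -/
structure IsReflectionOdd (Λ : Finset (Fin d → ℤ)) (a : Fin d) (s : ℤ)
    (u : (Fin d → ℤ) → (Fin d → ℤ) → ℤ) : Prop where
  isSignAssignment : IsSignAssignment Λ u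
  map_reflection : ∀ i ∈ Λ, ∀ j ∈ Λ, IsNN i j →
    u (latticeReflection a s i) (latticeReflection a s j) = -u i j
  crossing : ∀ i ∈ Λ, IsLeft a s i → IsNN i (latticeReflection a s i) →
    u i (latticeReflection a s i) = 1

theorem IsSignAssignment.reflectOnto (hΛ : ∀ i ∈ Λ, latticeReflection a s i ∈ Λ)
    (hu : IsSignAssignment Λ u) (p : (Fin d → ℤ) → Prop) :
    IsSignAssignment Λ (reflectOnto (latticeReflection a s) p u) := by
  intro i hi j hj hij
  obtain ⟨h_sign, h_anti⟩ := hu i hi j hj hij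
  obtain ⟨h_sign', h_anti'⟩ :=
    hu _ (hΛ i hi) _ (hΛ j hj) (isNN_latticeReflection_iff.2 hij)
  simp only [_root_.reflectOnto, or_comm (a := p j)]
  split_ifs
  · exact ⟨h_sign, h_anti⟩
  · exact ⟨by omega, by omega⟩

theorem isReflectionOdd_reflectOnto (hs : Odd s) (hΛ : ∀ i ∈ Λ, latticeReflection a s i ∈ Λ)
    (hu : IsSignAssignment Λ u)
    (h_cross : ∀ i ∈ Λ, IsLeft a s i → IsNN i (latticeReflection a s i) →
      u i (latticeReflection a s i) = 1) :
    IsReflectionOdd Λ a s (reflectOnto (latticeReflection a s) (IsLeft a s) u) where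
  isSignAssignment := hu.reflectOnto hΛ _
  map_reflection i hi j hj hij := by
    have h_invol := latticeReflection_involutive a s
    have h_anti := (hu i hi j hj hij).2
    by_cases hi_left : IsLeft a s i <;> by_cases hj_left : IsLeft a s j
    · simp [reflectOnto, isLeft_latticeReflection hs, h_invol _, hi_left, hj_left]
    · obtain rfl := hij.eq_latticeReflection hs hi_left hj_left
      simp [reflectOnto, isLeft_latticeReflection hs, h_invol _, hi_left, h_anti]
    · obtain rfl := hij.symm.eq_latticeReflection hs hj_left hi_left
      simp [reflectOnto, isLeft_latticeReflection hs, h_invol _, hj_left, h_anti]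
    · simp [reflectOnto, isLeft_latticeReflection hs, hi_left, hj_left]
  crossing i hi hi_left h_nn := by simp [reflectOnto, hi_left, h_cross i hi hi_left h_nn]

theorem bondMatrix_reflectOnto (hΛ : ∀ i ∈ Λ, latticeReflection a s i ∈ Λ)
    (hJ : IsReflectionPositive Λ a s J) (p : (Fin d → ℤ) → Prop) :
    bondMatrix Λ J (reflectOnto (latticeReflection a s) p u) =
      of (reflectOnto (Subtype.map _ hΛ) (fun i : Λ => p i) (bondMatrix Λ J u)) := by
  ext i j
  simp only [bondMatrix, reflectOnto, of_apply, Subtype.map_coe, isNN_latticeReflection_iff]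
  by_cases hij : IsNN (i : Fin d → ℤ) j
  · simp only [if_pos hij, hJ.map_reflection i i.2 j j.2 hij]
    split_ifs <;> push_cast <;> ring
  · simp [hij]

theorem posSemidef_crossing_bondMatrix (hs : Odd s) (hΛ : ∀ i ∈ Λ, latticeReflection a s i ∈ Λ)
    (hJ : IsReflectionPositive Λ a s J)
    (h_cross : ∀ i ∈ Λ, IsLeft a s i → IsNN i (latticeReflection a s i) →
      u i (latticeReflection a s i) = 1) :
    (of fun i j : {i : Λ // IsLeft a s i} =>
      bondMatrix Λ J u i (Subtype.map _ hΛ j)).PosSemidef := by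
  have h_diag : (of fun i j : {i : Λ // IsLeft a s i} => bondMatrix Λ J u i (Subtype.map _ hΛ j)) =
      diagonal fun i : {i : Λ // IsLeft a s i} => bondMatrix Λ J u i (Subtype.map _ hΛ i) := by
    ext i j
    rcases eq_or_ne i j with rfl | h_ne
    · simp
    · rw [diagonal_apply_ne _ h_ne, of_apply, bondMatrix, of_apply, if_neg]
      intro hij
      have h_eq := hij.eq_latticeReflection hs i.2
        (by simpa [isLeft_latticeReflection hs] using j.2)
      exact h_ne (Subtype.ext (Subtype.ext
        ((latticeReflection_involutive a s).injective h_eq).symm))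
  rw [h_diag]
  refine .diagonal fun i => ?_
  simp only [bondMatrix, of_apply, Subtype.map_coe]
  split_ifs with h_nn
  · rw [h_cross i i.1.2 i.2 h_nn, Int.cast_one, mul_one]
    exact hJ.crossing_nonneg i i.1.2 i.2 h_nn
  · rfl

variable {V : Type*} [NormedAddCommGroup V] [InnerProductSpace ℂ V] [FiniteDimensional ℂ V]
  [Nontrivial V] {c : (Fin d → ℤ) → (V →ₗ[ℂ] V)}

theorem leastEig_cubicH_reflectOnto_add_le (hs : Odd s)
    (hΛ : ∀ i ∈ Λ, latticeReflection a s i ∈ Λ) (hc : IsMajoranaFamily fun i : Λ => c i)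
    (hJ : IsReflectionPositive Λ a s J) (hu : IsSignAssignment Λ u)
    (h_cross : ∀ i ∈ Λ, IsLeft a s i → IsNN i (latticeReflection a s i) →
      u i (latticeReflection a s i) = 1) :
    leastEig (cubicH Λ J (reflectOnto (latticeReflection a s) (IsLeft a s) u) c) +
        leastEig (cubicH Λ J (reflectOnto (latticeReflection a s) (¬IsLeft a s ·) u) c) ≤
      2 * leastEig (cubicH Λ J u c) := by
  have h := leastEig_reflectOnto_add_le hc (θ := Subtype.map _ hΛ)
    (p := fun i : Λ => IsLeft a s i) (A := bondMatrix Λ J u)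
    (fun i => Subtype.ext (latticeReflection_involutive a s i))
    (fun i => isLeft_latticeReflection hs (i : Fin d → ℤ)) (transpose_bondMatrix hJ.symm hu)
    (posSemidef_crossing_bondMatrix hs hΛ hJ h_cross)
  rwa [← bondMatrix_reflectOnto hΛ hJ, ← bondMatrix_reflectOnto hΛ hJ (¬IsLeft a s ·),
    ← cubicH_eq_quadraticHamiltonian, ← cubicH_eq_quadraticHamiltonian,
    ← cubicH_eq_quadraticHamiltonian] at h

/-- The gauge making every bond that crosses `2 xₐ = s` from left to right positive: it flips the
right end of each crossing bond on which `u` equals `-1`. -/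
def crossingGauge (a : Fin d) (s : ℤ) (u : (Fin d → ℤ) → (Fin d → ℤ) → ℤ) (i : Fin d → ℤ) : ℤˣ :=
  if ¬IsLeft a s i ∧ u (latticeReflection a s i) i = -1 then -1 else 1

theorem gaugeTransform_crossingGauge (hs : Odd s) {i : Fin d → ℤ} (hi : IsLeft a s i)
    (hu : u i (latticeReflection a s i) = 1 ∨ u i (latticeReflection a s i) = -1) :
    gaugeTransform (crossingGauge a s u) u i (latticeReflection a s i) = 1 := by
  rcases hu with h | h <;>
    simp [gaugeTransform, crossingGauge, isLeft_latticeReflection hs, hi,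
      latticeReflection_involutive a s i, h]

theorem exists_isReflectionOdd_minimizer (hs : Odd s)
    (hΛ : ∀ i ∈ Λ, latticeReflection a s i ∈ Λ) (hc : IsMajoranaFamily fun i : Λ => c i)
    (hJ : IsReflectionPositive Λ a s J) :
    ∃ g w, IsReflectionOdd Λ a s w ∧ ∀ u, IsSignAssignment Λ u →
      leastEig (cubicH Λ J (gaugeTransform g w) c) ≤ leastEig (cubicH Λ J u c) := by
  obtain ⟨u, hu, h_min⟩ := exists_isSignAssignment_minimizing_leastEig Λ J c
  let g := crossingGauge a s u
  let u' := gaugeTransform g u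
  have hu' : IsSignAssignment Λ u' := hu.gaugeTransform g
  have h_cross (i) (hi : i ∈ Λ) (h_left : IsLeft a s i) (h_nn : IsNN i (latticeReflection a s i)) :
      u' i (latticeReflection a s i) = 1 :=
    gaugeTransform_crossingGauge hs h_left (hu i hi _ (hΛ i hi) h_nn).1
  have h_ineq := leastEig_cubicH_reflectOnto_add_le (c := g • c) hs hΛ
    (hc.units_smul fun i : Λ => g i) hJ hu' h_cross
  simp only [← cubicH_gaugeTransform, u', gaugeTransform_gaugeTransform] at h_ineq
  have h_right := h_min _ ((hu'.reflectOnto hΛ (¬IsLeft a s ·)).gaugeTransform g)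
  refine ⟨g, reflectOnto (latticeReflection a s) (IsLeft a s) u',
    isReflectionOdd_reflectOnto hs hΛ hu' h_cross, fun v hv => ?_⟩
  linarith [h_min v hv]

end LatticeReflectionPositivity

section Loops

theorem prod_range_succ_mod {M : Type*} [CommMonoid M] (f : ℕ → M) (n : ℕ) :
    ∏ k ∈ Finset.range n, f ((k + 1) % n) = ∏ k ∈ Finset.range n, f k := by
  cases n with
  | zero => rfl
  | succ m =>
    rw [Finset.prod_range_succ, Finset.prod_range_succ', Nat.mod_self]
    congr 1
    refine Finset.prod_congr rfl fun k hk => ?_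
    rw [Nat.mod_eq_of_lt (Nat.succ_lt_succ (Finset.mem_range.1 hk))]

theorem prod_range_two_mul_succ {M : Type*} [CommMonoid M] (f : ℕ → M) (N : ℕ) :
    ∏ k ∈ Finset.range (2 * (N + 1)), f k =
      (∏ k ∈ Finset.range N, f k * f (2 * N - k)) * (f N * f (2 * N + 1)) := by
  have h_reflect : ∏ k ∈ Finset.range (N + 1), f (N + k) =
      (∏ k ∈ Finset.range N, f (2 * N - k)) * f N := by
    rw [← Finset.prod_range_reflect, Finset.prod_range_succ]
    congr 1
    · refine Finset.prod_congr rfl fun k hk => congrArg f ?_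
      have := Finset.mem_range.1 hk
      omega
    · simp
  rw [show 2 * (N + 1) = N + (N + 1) + 1 by omega, Finset.prod_range_succ, Finset.prod_range_add,
    h_reflect, Finset.prod_mul_distrib, mul_assoc, mul_assoc, mul_assoc]
  congr 4
  omega

variable {d : ℕ} {Λ : Finset (Fin d → ℤ)} {a : Fin d} {s : ℤ}
  {u : (Fin d → ℤ) → (Fin d → ℤ) → ℤ} {v : ℕ → Fin d → ℤ}

/-- The ordered product of `u` along the closed path `v 0, …, v (n - 1), v 0`. -/
def loopProduct (u : (Fin d → ℤ) → (Fin d → ℤ) → ℤ) (v : ℕ → Fin d → ℤ) (n : ℕ) : ℤ :=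
  ∏ k ∈ Finset.range n, u (v k) (v ((k + 1) % n))

theorem loopProduct_gaugeTransform (g : (Fin d → ℤ) → ℤˣ) (u : (Fin d → ℤ) → (Fin d → ℤ) → ℤ)
    (v : ℕ → Fin d → ℤ) (n : ℕ) : loopProduct (gaugeTransform g u) v n = loopProduct u v n := by
  have h_sq : (∏ k ∈ Finset.range n, (g (v k) : ℤ)) * ∏ k ∈ Finset.range n, (g (v k) : ℤ) = 1 := by
    rw [← Finset.prod_mul_distrib]
    exact Finset.prod_eq_one fun k _ => Int.units_coe_mul_self _
  simp only [loopProduct, gaugeTransform, Finset.prod_mul_distrib,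
    prod_range_succ_mod fun k => (g (v k) : ℤ)]
  rw [mul_right_comm, h_sq, one_mul]

/-- A loop `v 0, …, v (2L - 1)` of distinct sites of `Λ` which the reflection in `2 xₐ = s` maps to
itself with reversed orientation. -/
structure IsReflectedLoop (Λ : Finset (Fin d → ℤ)) (a : Fin d) (s : ℤ) (L : ℕ)
    (v : ℕ → Fin d → ℤ) : Prop where
  pos : 1 ≤ L
  mem : ∀ k < 2 * L, v k ∈ Λ
  inj : ∀ k < 2 * L, ∀ k' < 2 * L, v k = v k' → k = k'
  isNN : ∀ k < 2 * L, IsNN (v k) (v ((k + 1) % (2 * L)))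
  reflection : ∀ k < 2 * L, latticeReflection a s (v k) = v (2 * L - 1 - k)

theorem IsReflectionOdd.mul_reflection (hu : IsReflectionOdd Λ a s u) {i j : Fin d → ℤ}
    (hi : i ∈ Λ) (hj : j ∈ Λ) (hij : IsNN i j) :
    u i j * u (latticeReflection a s j) (latticeReflection a s i) = 1 := by
  obtain ⟨h_sign, h_anti⟩ := hu.isSignAssignment i hi j hj hij
  rw [hu.map_reflection j hj i hi hij.symm, ← h_anti]
  rcases h_sign with h | h <;> simp [h]

theorem IsReflectionOdd.crossing_mul_crossing (hs : Odd s)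
    (hΛ : ∀ i ∈ Λ, latticeReflection a s i ∈ Λ) (hu : IsReflectionOdd Λ a s u) {i j : Fin d → ℤ}
    (hi : i ∈ Λ) (hj : j ∈ Λ) (hi_nn : IsNN i (latticeReflection a s i))
    (hj_nn : IsNN j (latticeReflection a s j)) (h_side : IsLeft a s i ↔ IsLeft a s j) :
    u i (latticeReflection a s i) * u (latticeReflection a s j) j = -1 := by
  have h_sign (x) (hx : x ∈ Λ) (hx_nn : IsNN x (latticeReflection a s x)) :
      u x (latticeReflection a s x) = if IsLeft a s x then 1 else -1 := by
    split_ifs with h_left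
    · exact hu.crossing x hx h_left hx_nn
    · have h := hu.crossing _ (hΛ x hx) ((isLeft_latticeReflection hs x).2 h_left)
      rw [latticeReflection_involutive a s x] at h
      rw [(hu.isSignAssignment x hx _ (hΛ x hx) hx_nn).2, h hx_nn.symm]
  rw [(hu.isSignAssignment _ (hΛ j hj) j hj hj_nn.symm).2, h_sign i hi hi_nn, h_sign j hj hj_nn]
  split_ifs <;> simp_all

namespace IsReflectedLoop

theorem isLeft_iff (hs : Odd s) {N : ℕ} (hv : IsReflectedLoop Λ a s (N + 1) v) {k : ℕ}
    (hk : k ≤ N) : IsLeft a s (v k) ↔ IsLeft a s (v 0) := by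
  induction k with
  | zero => rfl
  | succ k ih =>
    rw [← ih (by omega)]
    have h_nn : IsNN (v k) (v (k + 1)) := by
      simpa [Nat.mod_eq_of_lt (show k + 1 < 2 * (N + 1) by omega)] using hv.isNN k (by omega)
    have h_ne : v (k + 1) ≠ latticeReflection a s (v k) := fun h => by
      have := hv.inj _ (by omega) _ (by omega) (h.trans (hv.reflection k (by omega)))
      omega
    by_contra h_side
    by_cases h_left : IsLeft a s (v k)
    · exact h_ne (h_nn.eq_latticeReflection hs h_left fun h => h_side (by simp [h, h_left]))
    · refine h_ne ?_
      rw [h_nn.symm.eq_latticeReflection hs (by tauto) h_left, latticeReflection_involutive a s]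

theorem loopProduct_eq_neg_one (hs : Odd s) (hΛ : ∀ i ∈ Λ, latticeReflection a s i ∈ Λ) {L : ℕ}
    (hv : IsReflectedLoop Λ a s L v) (hu : IsReflectionOdd Λ a s u) :
    loopProduct u v (2 * L) = -1 := by
  obtain ⟨N, rfl⟩ := Nat.exists_eq_add_of_le' hv.pos
  have h_succ (k) (hk : k < 2 * N + 1) : (k + 1) % (2 * (N + 1)) = k + 1 :=
    Nat.mod_eq_of_lt (by omega)
  have h_refl (k) (hk : k < 2 * (N + 1)) : v (2 * N + 1 - k) = latticeReflection a s (v k) :=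
    (hv.reflection k hk).symm
  rw [loopProduct, prod_range_two_mul_succ]
  have h_paired (k) (hk : k ∈ Finset.range N) :
      u (v k) (v ((k + 1) % (2 * (N + 1)))) *
        u (v (2 * N - k)) (v ((2 * N - k + 1) % (2 * (N + 1)))) = 1 := by
    have hkN := Finset.mem_range.1 hk
    have h_nn := hv.isNN k (by omega)
    rw [h_succ k (by omega)] at h_nn ⊢
    rw [h_succ _ (by omega), show 2 * N - k + 1 = 2 * N + 1 - k by omega,
      show 2 * N - k = 2 * N + 1 - (k + 1) by omega, h_refl k (by omega), h_refl (k + 1) (by omega)]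
    exact hu.mul_reflection (hv.mem k (by omega)) (hv.mem (k + 1) (by omega)) h_nn
  have h_mid : v (N + 1) = latticeReflection a s (v N) := by
    rw [← h_refl N (by omega)]
    congr 1
    omega
  have h_nn_mid := hv.isNN N (by omega)
  have h_nn_last := hv.isNN (2 * N + 1) (by omega)
  have h_last := h_refl 0 (by omega)
  rw [Nat.sub_zero] at h_last
  rw [h_succ N (by omega), h_mid] at h_nn_mid
  rw [show 2 * N + 1 + 1 = 2 * (N + 1) by omega, Nat.mod_self, h_last] at h_nn_last
  rw [Finset.prod_eq_one h_paired, one_mul, h_succ N (by omega), h_mid,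
    show 2 * N + 1 + 1 = 2 * (N + 1) by omega, Nat.mod_self, h_last]
  exact hu.crossing_mul_crossing hs hΛ (hv.mem N (by omega)) (hv.mem 0 (by omega)) h_nn_mid
    h_nn_last.symm (hv.isLeft_iff hs le_rfl)

end IsReflectedLoop

end Loops

section Main

variable {d : ℕ} {Λ : Finset (Fin d → ℤ)} {a : Fin d}

theorem latticeReflection_mem_Icc {lo hi x : Fin d → ℤ} (hx : x ∈ Finset.Icc lo hi) :
    latticeReflection a (lo a + hi a) x ∈ Finset.Icc lo hi := by
  simp only [Finset.mem_Icc, Pi.le_def, latticeReflection] at hx ⊢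
  refine ⟨fun k => ?_, fun k => ?_⟩ <;> rcases eq_or_ne k a with rfl | hk
  · simp only [Function.update_self]
    linarith [hx.2 k]
  · simpa [hk] using hx.1 k
  · simp only [Function.update_self]
    linarith [hx.1 k]
  · simpa [hk] using hx.2 k

variable {V : Type*} [NormedAddCommGroup V] [InnerProductSpace ℂ V] [FiniteDimensional ℂ V]
  [Nontrivial V] {c : (Fin d → ℤ) → (V →ₗ[ℂ] V)} {s : ℤ} {J : (Fin d → ℤ) → (Fin d → ℤ) → ℝ}

theorem vortex_free_minimizer_cubic_lattice_general (hs : Odd s)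
    (hΛ : ∀ i ∈ Λ, latticeReflection a s i ∈ Λ) (hc : IsMajoranaFamily fun i : Λ => c i)
    (hJ : IsReflectionPositive Λ a s J) :
    ∃ u₀, IsSignAssignment Λ u₀ ∧
      (∀ u, IsSignAssignment Λ u → leastEig (cubicH Λ J u₀ c) ≤ leastEig (cubicH Λ J u c)) ∧
      ∀ L v, IsReflectedLoop Λ a s L v → -loopProduct u₀ v (2 * L) = 1 := by
  obtain ⟨g, w, hw, h_min⟩ := exists_isReflectionOdd_minimizer hs hΛ hc hJ
  refine ⟨gaugeTransform g w, hw.isSignAssignment.gaugeTransform g, h_min, fun L v hv => ?_⟩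
  rw [loopProduct_gaugeTransform, hv.loopProduct_eq_neg_one hs hΛ hw, neg_neg]

end Main

/-- Let `Λ = [lo, hi] ⊂ ℤ^d` be a rectangular box with an even number
of sites, invariant under the reflection `θ` in the hyperplane perpendicular to the
coordinate axis `a` at the half-integer position `(lo a + hi a)/2` (so `θ` fixes no
site), and let `(c_i)_{i∈Λ}` be a Majorana family indexed by `Λ`. Assume the symmetric
nonnegative couplings satisfy `J_{(θi, θj)} = J_{(ij)}` for every bond. Let
`C = (v 0, …, v (2L-1))` be a non-degenerate loop satisfying `θ (v k) = v (2L-1-k)`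
for all `k`. Then the minimum over all antisymmetric sign assignments `u` of the least
eigenvalue of `H̃_u` is attained at some sign assignment `u₀` for which the loop `C` is
vortex-free: `-∏_{(ij)∈C} u₀_{ij} = 1`. -/
theorem vortex_free_minimizer_cubic_lattice
    {V : Type*} [NormedAddCommGroup V] [InnerProductSpace ℂ V]
    [FiniteDimensional ℂ V] [Nontrivial V]
    {d : ℕ} (lo hi : Fin d → ℤ) (hlohi : lo ≤ hi) (a : Fin d)
    (Λ : Finset (Fin d → ℤ)) (hΛ : Λ = Finset.Icc lo hi) (hcard : Even Λ.card)
    (θ : (Fin d → ℤ) → (Fin d → ℤ))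
    (hθ : θ = fun x => Function.update x a (lo a + hi a - x a))
    (hodd : Odd (lo a + hi a))
    (c : (Fin d → ℤ) → (V →ₗ[ℂ] V))
    (hc : IsMajoranaFamily fun i : Λ => c (i : Fin d → ℤ))
    (J : (Fin d → ℤ) → (Fin d → ℤ) → ℝ)
    (hJsymm : ∀ i j, J i j = J j i) (hJpos : ∀ i j, 0 ≤ J i j)
    (hJrefl : ∀ i ∈ Λ, ∀ j ∈ Λ, IsNN i j → J (θ i) (θ j) = J i j)
    (L : ℕ) (hL : 1 ≤ L) (v : ℕ → Fin d → ℤ)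
    (hvΛ : ∀ k < 2 * L, v k ∈ Λ)
    (hvdist : ∀ k < 2 * L, ∀ k' < 2 * L, v k = v k' → k = k')
    (hvNN : ∀ k < 2 * L, IsNN (v k) (v ((k + 1) % (2 * L))))
    (hvnondeg : ∀ k < 2 * L, J (v k) (v ((k + 1) % (2 * L))) ≠ 0)
    (hvrefl : ∀ k < 2 * L, θ (v k) = v (2 * L - 1 - k)) :
    ∃ u₀, IsSignAssignment Λ u₀ ∧
      (∀ u, IsSignAssignment Λ u →
        leastEig (cubicH Λ J u₀ c) ≤ leastEig (cubicH Λ J u c)) ∧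
      -∏ k ∈ Finset.range (2 * L), u₀ (v k) (v ((k + 1) % (2 * L))) = 1 := by
  subst hΛ hθ
  obtain ⟨u₀, hu₀, h_min, h_loop⟩ := vortex_free_minimizer_cubic_lattice_general hodd
    (fun _ => latticeReflection_mem_Icc (a := a)) hc
    ⟨fun i _ j _ _ => hJsymm i j, hJrefl, fun _ _ _ _ => hJpos _ _⟩
  exact ⟨u₀, hu₀, h_min, h_loop L v ⟨hL, hvΛ, hvdist, hvNN, hvrefl⟩⟩
end
end

section
/- For the open or closed ladder of length N with real couplings J_{(ij)} and a Majorana family (b_k^x, b_k^y, b_k^z, c_k) indexed by the vertices, the operators γ_k^5 = b_k^x b_k^y b_k^z c_k (k = 1,…,4N) are self-adjoint, satisfy (γ_k^5)² = I, mutually commute, commute with every operator σ̃_m^α = i b_m^α c_m (m = 1,…,4N, α ∈ {x,y,z}), and commute with the fermionic ladder Hamiltonian H̃. -/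
noncomputable section
open scoped Classical

/-- The three bond types of the ladder. -/
inductive BondType : Type
  | x | y | z
  deriving DecidableEq

/-- Bonds of the open ladder of length `N`, with vertices `0, …, 4N-1` (these are the
1-based labels `1, …, 4N` of the paper shifted by one): type-z bonds `(2j, 2j+1)` for
`j = 0, …, 2N-1`; type-x bonds `(2j+1, 2j+2)` and type-y bonds `(2j, 2j+3)` for
`j = 0, …, 2N-2`. -/
def openBonds (N : ℕ) : List (ℕ × ℕ × BondType) :=
  ((List.range (2 * N)).map fun j => (2 * j, 2 * j + 1, BondType.z)) ++
    ((List.range (2 * N - 1)).map fun j => (2 * j + 1, 2 * j + 2, BondType.x)) ++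
    ((List.range (2 * N - 1)).map fun j => (2 * j, 2 * j + 3, BondType.y))

/-- Bonds of the closed ladder: the open ladder together with the closing
type-x bond `(4N-1, 0)` and the closing type-y bond `(4N-2, 1)`. -/
def closedBonds (N : ℕ) : List (ℕ × ℕ × BondType) :=
  openBonds N ++ [(4 * N - 1, 0, BondType.x), (4 * N - 2, 1, BondType.y)]

/-- The `16N` Majorana generators `b_k^α` and `c_k` of the fermionic ladder, indexed by
a vertex `k` together with `some α` (giving `b_k^α`) or `none` (giving `c_k`). -/
def ladderGen {A : Type*} (b : ℕ → BondType → A) (c : ℕ → A) :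
    ℕ × Option BondType → A
  | (k, none) => c k
  | (k, some α) => b k α

/-- The `16N` operators `b_k^α, c_k` (`k < 4N`) form a Majorana family. -/
def IsLadderMajorana {V : Type*} [NormedAddCommGroup V] [InnerProductSpace ℂ V]
    [FiniteDimensional ℂ V] (N : ℕ) (b : ℕ → BondType → (V →ₗ[ℂ] V))
    (c : ℕ → (V →ₗ[ℂ] V)) : Prop :=
  IsMajoranaFamily fun p : Fin (4 * N) × Option BondType => ladderGen b c ((p.1 : ℕ), p.2)

section LadderOps

variable {A : Type*} [Ring A] [Algebra ℂ A]

/-- The bond operator `u_{ij} = i b_i^t b_j^t` of the bond `e = (i, j, t)`. -/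
def uOp (b : ℕ → BondType → A) (e : ℕ × ℕ × BondType) : A :=
  Complex.I • (b e.1 e.2.2 * b e.2.1 e.2.2)

/-- The spin representative `σ̃_m^α = i b_m^α c_m`. -/
def sigmaOp (b : ℕ → BondType → A) (c : ℕ → A) (m : ℕ) (α : BondType) : A :=
  Complex.I • (b m α * c m)

/-- `γ_k^5 = b_k^x b_k^y b_k^z c_k`. -/
def gamma5 (b : ℕ → BondType → A) (c : ℕ → A) (k : ℕ) : A :=
  b k BondType.x * b k BondType.y * b k BondType.z * c k

/-- The term `⟨ij⟩ = J_{(ij)} u_{ij} i c_i c_j` of the fermionic ladder Hamiltonian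
on the bond `e = (i, j, t)`. -/
def bondTerm (J : ℕ × ℕ → ℝ) (b : ℕ → BondType → A) (c : ℕ → A)
    (e : ℕ × ℕ × BondType) : A :=
  (J (e.1, e.2.1) : ℂ) • (uOp b e * (Complex.I • (c e.1 * c e.2.1)))

/-- The fermionic ladder Hamiltonian `H̃ = Σ_{(ij)} J_{(ij)} u_{ij} i c_i c_j`,
each bond counted once. -/
def fermH (J : ℕ × ℕ → ℝ) (b : ℕ → BondType → A) (c : ℕ → A)
    (bonds : List (ℕ × ℕ × BondType)) : A :=
  (bonds.map (bondTerm J b c)).sum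

end LadderOps

/-- A (cyclic) loop: a length `len`, the vertex `v k` at cyclic position `k < len`, and
the type `t k` of the bond joining `v k` to `v ((k+1) % len)`. -/
structure Loop where
  len : ℕ
  v : ℕ → ℕ
  t : ℕ → BondType

/-- `L` is a loop of the lattice with bond list `bonds`: its vertices are distinct and
consecutive vertices are joined by a bond of `bonds` (traversed in either direction)
of the indicated type. -/
def Loop.IsLoopOf (L : Loop) (bonds : List (ℕ × ℕ × BondType)) : Prop :=
  3 ≤ L.len ∧
    (∀ k < L.len, ∀ k' < L.len, L.v k = L.v k' → k = k') ∧
    ∀ k < L.len,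
      (L.v k, L.v ((k + 1) % L.len), L.t k) ∈ bonds ∨
        (L.v ((k + 1) % L.len), L.v k, L.t k) ∈ bonds

/-- The fermionic vortex operator `B̃(C) = -u_{i₁i₂} u_{i₂i₃} ⋯ u_{i_ℓ i₁}` of a loop
(an ordered product around the loop). -/
def vortexOp {A : Type*} [Ring A] [Algebra ℂ A] (b : ℕ → BondType → A) (L : Loop) : A :=
  -((List.range L.len).map fun k => uOp b (L.v k, L.v ((k + 1) % L.len), L.t k)).prod

/-! Each `γ_k^5` is a product of four distinct Clifford generators, so it anticommutes with the
generators at the vertex `k` (it contains each of them once) and commutes with all the others.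
Hence it commutes with every product in which each vertex contributes an even number of generators;
`γ_l^5`, `σ̃_m^α` and every bond term `u_{ij} c_i c_j` are of this form. Grouping
`γ_k^5 = (b_k^x b_k^y) (b_k^z c_k)` exhibits it as a product of two commuting elements that are
skew-adjoint and square to `-1`, whence it is self-adjoint and squares to `1`. -/

/-- The elements `a` and `b` commute up to the scalar `q`. With `q : ℤˣ` this records commuting
and anticommuting pairs at once, so that signs can be multiplied along products. -/
def QCommute {R A : Type*} [Mul A] [SMul R A] (q : R) (a b : A) : Prop :=
  a * b = q • (b * a)

namespace QCommute

section Semigroup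

variable {R A : Type*} [CommMonoid R] [Semigroup A] [MulAction R A] [IsScalarTower R A A]
  [SMulCommClass R A A] {q q' : R} {a a' b b' : A}

theorem mul_right (h : QCommute q a b) (h' : QCommute q' a b') :
    QCommute (q * q') a (b * b') :=
  calc a * (b * b') = q • (b * (a * b')) := by
        rw [← mul_assoc, h, smul_mul_assoc, mul_assoc]
    _ = (q * q') • (b * b' * a) := by rw [h', mul_smul_comm, smul_smul, mul_assoc]

theorem mul_left (h : QCommute q a b) (h' : QCommute q' a' b) :
    QCommute (q * q') (a * a') b :=
  calc a * a' * b = q' • (a * b * a') := by rw [mul_assoc, h', mul_smul_comm, mul_assoc]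
    _ = (q * q') • (b * (a * a')) := by
        rw [h, smul_mul_assoc, smul_smul, mul_comm q', mul_assoc]

end Semigroup

theorem commute_mul_right {A : Type*} [Ring A] {q : ℤˣ} {a b b' : A} (h : QCommute q a b)
    (h' : QCommute q a b') : Commute a (b * b') := by
  simpa [QCommute, commute_iff_eq] using h.mul_right h'

end QCommute

namespace AntiCommute

variable {A : Type*} [Ring A] {a b c d : A}

theorem qCommute (h : AntiCommute a b) : QCommute (-1 : ℤˣ) a b := by
  simpa [QCommute, AntiCommute] using h

theorem commute_mul_mul (hac : AntiCommute a c) (had : AntiCommute a d) (hbc : AntiCommute b c)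
    (hbd : AntiCommute b d) : Commute (a * b) (c * d) :=
  (hac.qCommute.commute_mul_right had.qCommute).mul_left
    (hbc.qCommute.commute_mul_right hbd.qCommute)

theorem mul_mul_mul_self (h : AntiCommute a b) (ha : a * a = 1) (hb : b * b = 1) :
    a * b * (a * b) = -1 :=
  calc a * b * (a * b) = -(a * b * (b * a)) := by rw [← mul_neg, ← h]
    _ = -(a * (b * b) * a) := by simp only [mul_assoc]
    _ = -1 := by rw [hb, mul_one, ha]

theorem star_mul_eq_neg [StarRing A] (h : AntiCommute a b) (ha : IsSelfAdjoint a)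
    (hb : IsSelfAdjoint b) : star (a * b) = -(a * b) := by
  rw [star_mul, ha.star_eq, hb.star_eq, h, neg_neg]

end AntiCommute

/-- The family `c` satisfies the Clifford relations of a Majorana family on the index set `s`,
in an arbitrary ring. Since `2` need not be invertible there, the diagonal relations read
`cᵢ² = 1`. Self-adjointness is not included. -/
structure IsCliffordOn {S A : Type*} [Ring A] (c : S → A) (s : Set S) : Prop where
  mul_self : ∀ i ∈ s, c i * c i = 1
  antiCommute : s.Pairwise fun i j => AntiCommute (c i) (c j)

theorem IsCliffordOn.qCommute {S A : Type*} [Ring A] [DecidableEq S] {c : S → A} {s : Set S}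
    (h : IsCliffordOn c s) {i j : S} (hi : i ∈ s) (hj : j ∈ s) :
    QCommute (if i = j then 1 else -1 : ℤˣ) (c i) (c j) := by
  split_ifs with hij
  · simp [QCommute, hij]
  · exact (h.antiCommute hi hj hij).qCommute

theorem IsLadderMajorana.isSelfAdjoint {V : Type*} [NormedAddCommGroup V]
    [InnerProductSpace ℂ V] [FiniteDimensional ℂ V] {N : ℕ} {b : ℕ → BondType → (V →ₗ[ℂ] V)}
    {c : ℕ → (V →ₗ[ℂ] V)} (h : IsLadderMajorana N b c) :
    ∀ p ∈ Set.Iio (4 * N) ×ˢ (Set.univ : Set (Option BondType)),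
      IsSelfAdjoint (ladderGen b c p) :=
  fun p hp => h.1 (⟨p.1, hp.1⟩, p.2)

theorem IsLadderMajorana.isCliffordOn {V : Type*} [NormedAddCommGroup V]
    [InnerProductSpace ℂ V] [FiniteDimensional ℂ V] {N : ℕ} {b : ℕ → BondType → (V →ₗ[ℂ] V)}
    {c : ℕ → (V →ₗ[ℂ] V)} (h : IsLadderMajorana N b c) :
    IsCliffordOn (ladderGen b c) (Set.Iio (4 * N) ×ˢ Set.univ) where
  mul_self p hp := by
    have hpp := h.2 (⟨p.1, hp.1⟩, p.2) (⟨p.1, hp.1⟩, p.2)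
    rw [if_pos rfl, ← two_smul ℂ] at hpp
    exact smul_right_injective _ two_ne_zero hpp
  antiCommute p hp p' hp' hne := by
    have hpp' := h.2 (⟨p.1, hp.1⟩, p.2) (⟨p'.1, hp'.1⟩, p'.2)
    rw [if_neg (by simpa [Prod.ext_iff, Fin.ext_iff] using hne)] at hpp'
    exact eq_neg_of_add_eq_zero_left hpp'

section SignCommute

variable {A : Type*} [Ring A] {b : ℕ → BondType → A} {c : ℕ → A} {g : A}

theorem gamma5_eq_mul_mul (b : ℕ → BondType → A) (c : ℕ → A) (k : ℕ) :
    gamma5 b c k = b k .x * b k .y * (b k .z * c k) :=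
  mul_assoc _ _ _

theorem commute_gamma5_of_qCommute {q : ℤˣ} {m : ℕ}
    (h : ∀ o, QCommute q g (ladderGen b c (m, o))) : Commute g (gamma5 b c m) := by
  rw [gamma5_eq_mul_mul]
  exact ((h (some .x)).commute_mul_right (h (some .y))).mul_right
    ((h (some .z)).commute_mul_right (h none))

variable [Algebra ℂ A]

theorem commute_sigmaOp_of_qCommute {q : ℤˣ} {m : ℕ}
    (h : ∀ o, QCommute q g (ladderGen b c (m, o))) (α : BondType) :
    Commute g (sigmaOp b c m α) :=
  ((h (some α)).commute_mul_right (h none)).smul_right Complex.I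

theorem commute_bondTerm_of_qCommute (J : ℕ × ℕ → ℝ) {q q' : ℤˣ} {e : ℕ × ℕ × BondType}
    (h : ∀ o, QCommute q g (ladderGen b c (e.1, o)))
    (h' : ∀ o, QCommute q' g (ladderGen b c (e.2.1, o))) : Commute g (bondTerm J b c e) := by
  have hbb : QCommute (q * q') g (b e.1 e.2.2 * b e.2.1 e.2.2) :=
    (h (some e.2.2)).mul_right (h' (some e.2.2))
  have hcc : QCommute (q * q') g (c e.1 * c e.2.1) := (h none).mul_right (h' none)
  rw [bondTerm, uOp, smul_mul_smul_comm]
  exact ((hbb.commute_mul_right hcc).smul_right _).smul_right _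

theorem commute_fermH_of_qCommute (J : ℕ × ℕ → ℝ) {q : ℕ → ℤˣ} {s : Set ℕ}
    {bonds : List (ℕ × ℕ × BondType)} (hbonds : ∀ e ∈ bonds, e.1 ∈ s ∧ e.2.1 ∈ s)
    (h : ∀ m ∈ s, ∀ o, QCommute (q m) g (ladderGen b c (m, o))) :
    Commute g (fermH J b c bonds) :=
  Commute.list_sum_right _ _ <| List.forall_mem_map.2 fun e he =>
    commute_bondTerm_of_qCommute J (h _ (hbonds e he).1) (h _ (hbonds e he).2)

end SignCommute

section Gamma5

variable {A : Type*} [Ring A] {b : ℕ → BondType → A} {c : ℕ → A} {s : Set ℕ} {k m : ℕ}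

theorem IsCliffordOn.antiCommute_ladderGen (h : IsCliffordOn (ladderGen b c) (s ×ˢ Set.univ))
    (hk : k ∈ s) {o o' : Option BondType} (ho : o ≠ o') :
    AntiCommute (ladderGen b c (k, o)) (ladderGen b c (k, o')) :=
  h.antiCommute (Set.mk_mem_prod hk trivial) (Set.mk_mem_prod hk trivial) (by simpa using ho)

theorem qCommute_gamma5_ladderGen (h : IsCliffordOn (ladderGen b c) (s ×ˢ Set.univ))
    (hk : k ∈ s) (hm : m ∈ s) (o : Option BondType) :
    QCommute (if k = m then -1 else 1 : ℤˣ) (gamma5 b c k) (ladderGen b c (m, o)) := by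
  have hgen (o' : Option BondType) := h.qCommute (i := (k, o')) (j := (m, o))
    (Set.mk_mem_prod hk trivial) (Set.mk_mem_prod hm trivial)
  have hsign : (if k = m then -1 else 1 : ℤˣ) =
      (if (k, some .x) = (m, o) then 1 else -1) * (if (k, some .y) = (m, o) then 1 else -1) *
        (if (k, some .z) = (m, o) then 1 else -1) * (if (k, none) = (m, o) then 1 else -1) := by
    by_cases hkm : k = m
    · rcases o with _ | _ | _ | _ <;> simp [hkm]
    · simp [hkm]
  rw [hsign]
  exact (((hgen (some .x)).mul_left (hgen (some .y))).mul_left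
    (hgen (some .z))).mul_left (hgen none)

theorem IsCliffordOn.commute_bx_mul_by_bz_mul_c
    (h : IsCliffordOn (ladderGen b c) (s ×ˢ Set.univ)) (hk : k ∈ s) :
    Commute (b k .x * b k .y) (b k .z * c k) :=
  have hxz : AntiCommute (b k .x) (b k .z) :=
    h.antiCommute_ladderGen hk (o := some .x) (o' := some .z) (by simp)
  have hxc : AntiCommute (b k .x) (c k) :=
    h.antiCommute_ladderGen hk (o := some .x) (o' := none) (by simp)
  have hyz : AntiCommute (b k .y) (b k .z) :=
    h.antiCommute_ladderGen hk (o := some .y) (o' := some .z) (by simp)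
  have hyc : AntiCommute (b k .y) (c k) :=
    h.antiCommute_ladderGen hk (o := some .y) (o' := none) (by simp)
  hxz.commute_mul_mul hxc hyz hyc

theorem gamma5_mul_self (h : IsCliffordOn (ladderGen b c) (s ×ˢ Set.univ)) (hk : k ∈ s) :
    gamma5 b c k * gamma5 b c k = 1 := by
  have hsq (o : Option BondType) : ladderGen b c (k, o) * ladderGen b c (k, o) = 1 :=
    h.mul_self _ (Set.mk_mem_prod hk trivial)
  have hxy : b k .x * b k .y * (b k .x * b k .y) = -1 :=
    (h.antiCommute_ladderGen hk (o := some .x) (o' := some .y) (by simp)).mul_mul_mul_self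
      (hsq (some .x)) (hsq (some .y))
  have hzc : b k .z * c k * (b k .z * c k) = -1 :=
    (h.antiCommute_ladderGen hk (o := some .z) (o' := none) (by simp)).mul_mul_mul_self
      (hsq (some .z)) (hsq none)
  rw [gamma5_eq_mul_mul, (h.commute_bx_mul_by_bz_mul_c hk).symm.mul_mul_mul_comm, hxy, hzc,
    neg_mul_neg, one_mul]

theorem isSelfAdjoint_gamma5 [StarRing A] (h : IsCliffordOn (ladderGen b c) (s ×ˢ Set.univ))
    (hk : k ∈ s) (hsa : ∀ o, IsSelfAdjoint (ladderGen b c (k, o))) :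
    IsSelfAdjoint (gamma5 b c k) := by
  have hxy : star (b k .x * b k .y) = -(b k .x * b k .y) :=
    (h.antiCommute_ladderGen hk (o := some .x) (o' := some .y) (by simp)).star_mul_eq_neg
      (hsa (some .x)) (hsa (some .y))
  have hzc : star (b k .z * c k) = -(b k .z * c k) :=
    (h.antiCommute_ladderGen hk (o := some .z) (o' := none) (by simp)).star_mul_eq_neg
      (hsa (some .z)) (hsa none)
  rw [isSelfAdjoint_iff, gamma5_eq_mul_mul, star_mul, hxy, hzc, neg_mul_neg,
    (h.commute_bx_mul_by_bz_mul_c hk).eq]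

end Gamma5

section LadderBonds

variable {N : ℕ} {e : ℕ × ℕ × BondType}

theorem lt_of_mem_openBonds (he : e ∈ openBonds N) : e.1 < 4 * N ∧ e.2.1 < 4 * N := by
  simp only [openBonds, List.mem_append, List.mem_map, List.mem_range] at he
  rcases he with (⟨j, hj, rfl⟩ | ⟨j, hj, rfl⟩) | ⟨j, hj, rfl⟩ <;>
    constructor <;> dsimp only <;> omega

theorem lt_of_mem_closedBonds (hN : 0 < N) (he : e ∈ closedBonds N) :
    e.1 < 4 * N ∧ e.2.1 < 4 * N := by
  simp only [closedBonds, List.mem_append, List.mem_cons, List.not_mem_nil, or_false] at he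
  rcases he with he | rfl | rfl
  · exact lt_of_mem_openBonds he
  all_goals constructor <;> dsimp only <;> omega

end LadderBonds

theorem gamma5_properties_general {A : Type*} [Ring A] [StarRing A] [Algebra ℂ A]
    {s : Set ℕ} {bonds : List (ℕ × ℕ × BondType)}
    (hbonds : ∀ e ∈ bonds, e.1 ∈ s ∧ e.2.1 ∈ s) (J : ℕ × ℕ → ℝ)
    {b : ℕ → BondType → A} {c : ℕ → A}
    (hsa : ∀ p ∈ s ×ˢ (Set.univ : Set (Option BondType)), IsSelfAdjoint (ladderGen b c p))
    (h : IsCliffordOn (ladderGen b c) (s ×ˢ Set.univ)) :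
    ∀ k ∈ s,
      IsSelfAdjoint (gamma5 b c k) ∧
      gamma5 b c k * gamma5 b c k = 1 ∧
      (∀ l ∈ s, Commute (gamma5 b c k) (gamma5 b c l)) ∧
      (∀ m ∈ s, ∀ α : BondType, Commute (gamma5 b c k) (sigmaOp b c m α)) ∧
      Commute (gamma5 b c k) (fermH J b c bonds) := by
  intro k hk
  have hsign : ∀ m ∈ s, ∀ o,
      QCommute (if k = m then -1 else 1 : ℤˣ) (gamma5 b c k) (ladderGen b c (m, o)) :=
    fun _ hm => qCommute_gamma5_ladderGen h hk hm
  exact ⟨isSelfAdjoint_gamma5 h hk fun _ => hsa _ (Set.mk_mem_prod hk trivial),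
    gamma5_mul_self h hk,
    fun l hl => commute_gamma5_of_qCommute (hsign l hl),
    fun m hm => commute_sigmaOp_of_qCommute (hsign m hm),
    commute_fermH_of_qCommute J hbonds hsign⟩

/-- For the open or closed ladder of length `N` with real couplings
`J_{(ij)}` and a Majorana family `(b_k^x, b_k^y, b_k^z, c_k)` indexed by the vertices,
the operators `γ_k^5 = b_k^x b_k^y b_k^z c_k` are self-adjoint, square to `I`, mutually
commute, commute with every `σ̃_m^α = i b_m^α c_m`, and commute with the fermionic
ladder Hamiltonian `H̃`. -/
theorem gamma5_properties
    {V : Type*} [NormedAddCommGroup V] [InnerProductSpace ℂ V]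
    [FiniteDimensional ℂ V] [Nontrivial V]
    (N : ℕ) (hN : 2 ≤ N)
    (bonds : List (ℕ × ℕ × BondType))
    (hbonds : bonds = openBonds N ∨ bonds = closedBonds N)
    (J : ℕ × ℕ → ℝ)
    (b : ℕ → BondType → (V →ₗ[ℂ] V)) (c : ℕ → (V →ₗ[ℂ] V))
    (hbc : IsLadderMajorana N b c) :
    ∀ k < 4 * N,
      IsSelfAdjoint (gamma5 b c k) ∧
      gamma5 b c k * gamma5 b c k = 1 ∧
      (∀ l < 4 * N, Commute (gamma5 b c k) (gamma5 b c l)) ∧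
      (∀ m < 4 * N, ∀ α : BondType, Commute (gamma5 b c k) (sigmaOp b c m α)) ∧
      Commute (gamma5 b c k) (fermH J b c bonds) := by
  have hlt : ∀ e ∈ bonds, e.1 < 4 * N ∧ e.2.1 < 4 * N := by
    rcases hbonds with rfl | rfl
    · exact fun _ => lt_of_mem_openBonds
    · exact fun _ => lt_of_mem_closedBonds (by omega)
  exact gamma5_properties_general hlt J hbc.isSelfAdjoint hbc.isCliffordOn
end
end

section
/- For the open or closed ladder of length N with real couplings J_{(ij)} and a Majorana family (b_k^x, b_k^y, b_k^z, c_k) indexed by the vertices, the fermionic vortex operators B̃(C) = −u_{i_1 i_2} u_{i_2 i_3} ⋯ u_{i_ℓ i_1} associated to loops C = (i_1,…,i_ℓ) satisfy: each B̃(C) is self-adjoint with B̃(C)² = I (so its eigenvalues lie in {±1}); B̃(C) B̃(C′) = B̃(C′) B̃(C) for any two loops C, C′; and B̃(C) commutes with the fermionic ladder Hamiltonian H̃. -/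
/-!
A bond operator `u_{ij} = i b_i^t b_j^t` is `i` times a product of two anticommuting self-adjoint
involutions, hence itself a self-adjoint involution, and `u_{ji} = -u_{ij}`. Bond operators of
distinct bonds involve four different Majoranas, because bonds of equal type never share a vertex;
so they commute, as does each of them with every product `c_k c_l`. A vortex operator is, up to
sign, a product of bond operators, and signed products of commuting self-adjoint involutions are
again self-adjoint involutions which commute with each other and with whatever commutes with the
factors.
-/

noncomputable section
open scoped Classical

section ClosureOfInvolutions

variable {M : Type*} [Monoid M] {s : Set M} {x y : M}

theorem commute_of_mem_closure (h : ∀ z ∈ s, Commute z y) (hx : x ∈ Submonoid.closure s) :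
    Commute x y :=
  Submonoid.closure_induction h (.one_left y) (fun _ _ _ _ => .mul_left) hx

theorem commute_of_mem_closure_of_mem_closure (hcomm : ∀ a ∈ s, ∀ b ∈ s, Commute a b)
    (hx : x ∈ Submonoid.closure s) (hy : y ∈ Submonoid.closure s) : Commute x y :=
  commute_of_mem_closure
    (fun a ha => (commute_of_mem_closure (fun b hb => hcomm b hb a ha) hy).symm) hx

theorem isSelfAdjoint_of_mem_closure [StarMul M] (hcomm : ∀ a ∈ s, ∀ b ∈ s, Commute a b)
    (hs : ∀ a ∈ s, IsSelfAdjoint a) (hx : x ∈ Submonoid.closure s) : IsSelfAdjoint x := by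
  induction hx using Submonoid.closure_induction with
  | mem a ha => exact hs a ha
  | one => exact .one M
  | mul a b ha hb iha ihb =>
    exact (iha.commute_iff ihb).1 (commute_of_mem_closure_of_mem_closure hcomm ha hb)

theorem mul_self_eq_one_of_mem_closure (hcomm : ∀ a ∈ s, ∀ b ∈ s, Commute a b)
    (hs : ∀ a ∈ s, a * a = 1) (hx : x ∈ Submonoid.closure s) : x * x = 1 := by
  induction hx using Submonoid.closure_induction with
  | mem a ha => exact hs a ha
  | one => exact mul_one 1
  | mul a b ha hb iha ihb =>
    rw [(commute_of_mem_closure_of_mem_closure hcomm hb ha).mul_mul_mul_comm, iha, ihb, mul_one]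

end ClosureOfInvolutions

namespace AntiCommute

section Ring

variable {A : Type*} [Ring A] {a x y z w : A}

theorem symm (h : AntiCommute x y) : AntiCommute y x :=
  neg_eq_iff_eq_neg.1 (Eq.symm h)

theorem commute_mul_right (hx : AntiCommute a x) (hy : AntiCommute a y) : Commute a (x * y) :=
  calc
    a * (x * y) = -(x * (a * y)) := by rw [← mul_assoc, hx, neg_mul, mul_assoc]
    _ = x * y * a := by rw [hy, mul_neg, neg_neg, mul_assoc]

theorem commute_mul_mul_s8 (hxz : AntiCommute x z) (hxw : AntiCommute x w) (hyz : AntiCommute y z)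
    (hyw : AntiCommute y w) : Commute (x * y) (z * w) :=
  (hxz.commute_mul_right hxw).mul_left (hyz.commute_mul_right hyw)

theorem mul_mul_mul_self_s8 (h : AntiCommute x y) (hx : x * x = 1) (hy : y * y = 1) :
    x * y * (x * y) = -1 :=
  calc
    x * y * (x * y) = x * (y * x) * y := by simp only [mul_assoc]
    _ = -(x * x * (y * y)) := by rw [h.symm, mul_neg, neg_mul]; simp only [mul_assoc]
    _ = -1 := by rw [hx, hy, mul_one]

end Ring

section ComplexAlgebra

variable {A : Type*} [Ring A] [Algebra ℂ A] {x y : A}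

theorem I_smul_mul_swap (h : AntiCommute x y) :
    Complex.I • (y * x) = -(Complex.I • (x * y)) := by
  rw [h.symm, smul_neg]

theorem I_smul_mul_mul_self (h : AntiCommute x y) (hx : x * x = 1) (hy : y * y = 1) :
    Complex.I • (x * y) * Complex.I • (x * y) = 1 := by
  rw [smul_mul_smul_comm, Complex.I_mul_I, h.mul_mul_mul_self_s8 hx hy, neg_smul_neg, one_smul]

theorem isSelfAdjoint_I_smul_mul [StarRing A] [StarModule ℂ A] (h : AntiCommute x y)
    (hx : IsSelfAdjoint x) (hy : IsSelfAdjoint y) : IsSelfAdjoint (Complex.I • (x * y)) :=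
  calc
    star (Complex.I • (x * y)) = -(Complex.I • (y * x)) := by
      rw [star_smul, star_mul, hx.star_eq, hy.star_eq, Complex.star_def, Complex.conj_I, neg_smul]
    _ = Complex.I • (x * y) := by rw [h.I_smul_mul_swap, neg_neg]

end ComplexAlgebra

end AntiCommute

/-- The notion of a Majorana family in an arbitrary `*`-ring, with the relations required only for
the indices in `s`; the Clifford relations are split into the cases of equal and of distinct
indices. -/
structure IsMajoranaFamilyOn {A ι : Type*} [Ring A] [StarRing A] (γ : ι → A) (s : Set ι) :
    Prop where
  isSelfAdjoint : ∀ p ∈ s, IsSelfAdjoint (γ p)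
  mul_self : ∀ p ∈ s, γ p * γ p = 1
  antiCommute : ∀ p ∈ s, ∀ q ∈ s, p ≠ q → AntiCommute (γ p) (γ q)

/-- A lattice with vertex set `S` and typed bonds, none of which is a self-loop, in which any two
distinct bonds sharing a vertex have different types: a proper edge colouring by `BondType`. -/
structure IsProperlyTyped (S : Set ℕ) (bonds : List (ℕ × ℕ × BondType)) : Prop where
  fst_mem : ∀ e ∈ bonds, e.1 ∈ S
  snd_mem : ∀ e ∈ bonds, e.2.1 ∈ S
  fst_ne_snd : ∀ e ∈ bonds, e.1 ≠ e.2.1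
  disjoint : ∀ e ∈ bonds, ∀ f ∈ bonds, e ≠ f → e.2.2 = f.2.2 →
    e.1 ≠ f.1 ∧ e.1 ≠ f.2.1 ∧ e.2.1 ≠ f.1 ∧ e.2.1 ≠ f.2.1

/-- `L` is a closed walk along `bonds`: consecutive vertices are joined by a bond, traversed in
either direction. Unlike for a loop, vertices and bonds may repeat. -/
def Loop.IsClosedWalkOf (L : Loop) (bonds : List (ℕ × ℕ × BondType)) : Prop :=
  ∀ k < L.len,
    (L.v k, L.v ((k + 1) % L.len), L.t k) ∈ bonds ∨
      (L.v ((k + 1) % L.len), L.v k, L.t k) ∈ bonds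

theorem Loop.IsLoopOf.isClosedWalkOf {L : Loop} {bonds : List (ℕ × ℕ × BondType)}
    (hL : L.IsLoopOf bonds) : L.IsClosedWalkOf bonds :=
  hL.2.2

/-- The bond operators of `bonds` together with the sign `-1`: the factors out of which vortex
operators are built. -/
def signedBondOps {A : Type*} [Ring A] [Algebra ℂ A] (b : ℕ → BondType → A)
    (bonds : List (ℕ × ℕ × BondType)) : Set A :=
  insert (-1) (uOp b '' {e | e ∈ bonds})

namespace IsProperlyTyped

section BondOperators

variable {A : Type*} [Ring A] [StarRing A] {S : Set ℕ} {bonds : List (ℕ × ℕ × BondType)}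
  {b : ℕ → BondType → A} {e f : ℕ × ℕ × BondType}

theorem antiCommute_ends (hB : IsProperlyTyped S bonds)
    (hb : IsMajoranaFamilyOn (Function.uncurry b) {p | p.1 ∈ S}) (he : e ∈ bonds) :
    AntiCommute (b e.1 e.2.2) (b e.2.1 e.2.2) :=
  hb.antiCommute (e.1, e.2.2) (hB.fst_mem e he) (e.2.1, e.2.2) (hB.snd_mem e he)
    fun h => hB.fst_ne_snd e he (congrArg Prod.fst h)

variable [Algebra ℂ A]

theorem isSelfAdjoint_uOp [StarModule ℂ A] (hB : IsProperlyTyped S bonds)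
    (hb : IsMajoranaFamilyOn (Function.uncurry b) {p | p.1 ∈ S}) (he : e ∈ bonds) :
    IsSelfAdjoint (uOp b e) :=
  (hB.antiCommute_ends hb he).isSelfAdjoint_I_smul_mul
    (hb.isSelfAdjoint (e.1, e.2.2) (hB.fst_mem e he))
    (hb.isSelfAdjoint (e.2.1, e.2.2) (hB.snd_mem e he))

theorem uOp_mul_self (hB : IsProperlyTyped S bonds)
    (hb : IsMajoranaFamilyOn (Function.uncurry b) {p | p.1 ∈ S}) (he : e ∈ bonds) :
    uOp b e * uOp b e = 1 :=
  (hB.antiCommute_ends hb he).I_smul_mul_mul_self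
    (hb.mul_self (e.1, e.2.2) (hB.fst_mem e he))
    (hb.mul_self (e.2.1, e.2.2) (hB.snd_mem e he))

theorem uOp_swap (hB : IsProperlyTyped S bonds)
    (hb : IsMajoranaFamilyOn (Function.uncurry b) {p | p.1 ∈ S}) (he : e ∈ bonds) :
    uOp b (e.2.1, e.1, e.2.2) = -uOp b e :=
  (hB.antiCommute_ends hb he).I_smul_mul_swap

theorem commute_uOp_uOp (hB : IsProperlyTyped S bonds)
    (hb : IsMajoranaFamilyOn (Function.uncurry b) {p | p.1 ∈ S}) (he : e ∈ bonds)
    (hf : f ∈ bonds) : Commute (uOp b e) (uOp b f) := by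
  obtain rfl | hef := eq_or_ne e f
  · exact .refl _
  have anti {i j : ℕ} (hi : i ∈ S) (hj : j ∈ S) (hij : e.2.2 = f.2.2 → i ≠ j) :
      AntiCommute (b i e.2.2) (b j f.2.2) :=
    hb.antiCommute (i, e.2.2) hi (j, f.2.2) hj fun h =>
      hij (Prod.ext_iff.1 h).2 (Prod.ext_iff.1 h).1
  have hdisj := hB.disjoint e he f hf hef
  have he₁ := hB.fst_mem e he
  have he₂ := hB.snd_mem e he
  have hf₁ := hB.fst_mem f hf
  have hf₂ := hB.snd_mem f hf
  have hprod : Commute (b e.1 e.2.2 * b e.2.1 e.2.2) (b f.1 f.2.2 * b f.2.1 f.2.2) :=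
    (anti he₁ hf₁ fun h => (hdisj h).1).commute_mul_mul_s8 (anti he₁ hf₂ fun h => (hdisj h).2.1)
      (anti he₂ hf₁ fun h => (hdisj h).2.2.1) (anti he₂ hf₂ fun h => (hdisj h).2.2.2)
  exact (hprod.smul_left _).smul_right _

theorem commute_of_mem_signedBondOps (hB : IsProperlyTyped S bonds)
    (hb : IsMajoranaFamilyOn (Function.uncurry b) {p | p.1 ∈ S}) :
    ∀ x ∈ signedBondOps b bonds, ∀ y ∈ signedBondOps b bonds, Commute x y := by
  rintro _ (rfl | ⟨e, he, rfl⟩) _ (rfl | ⟨f, hf, rfl⟩)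
  · exact .refl _
  · exact .neg_one_left _
  · exact .neg_one_right _
  · exact hB.commute_uOp_uOp hb he hf

theorem isSelfAdjoint_of_mem_signedBondOps [StarModule ℂ A] (hB : IsProperlyTyped S bonds)
    (hb : IsMajoranaFamilyOn (Function.uncurry b) {p | p.1 ∈ S}) :
    ∀ x ∈ signedBondOps b bonds, IsSelfAdjoint x := by
  rintro _ (rfl | ⟨e, he, rfl⟩)
  · exact (IsSelfAdjoint.one A).neg
  · exact hB.isSelfAdjoint_uOp hb he

theorem mul_self_of_mem_signedBondOps (hB : IsProperlyTyped S bonds)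
    (hb : IsMajoranaFamilyOn (Function.uncurry b) {p | p.1 ∈ S}) :
    ∀ x ∈ signedBondOps b bonds, x * x = 1 := by
  rintro _ (rfl | ⟨e, he, rfl⟩)
  · rw [neg_mul_neg, one_mul]
  · exact hB.uOp_mul_self hb he

theorem vortexOp_mem_closure_signedBondOps (hB : IsProperlyTyped S bonds)
    (hb : IsMajoranaFamilyOn (Function.uncurry b) {p | p.1 ∈ S}) {L : Loop}
    (hL : L.IsClosedWalkOf bonds) :
    vortexOp b L ∈ Submonoid.closure (signedBondOps b bonds) := by
  have hneg {x : A} (hx : x ∈ Submonoid.closure (signedBondOps b bonds)) :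
      -x ∈ Submonoid.closure (signedBondOps b bonds) :=
    neg_one_mul x ▸ mul_mem (Submonoid.subset_closure (Set.mem_insert _ _)) hx
  have hbond {e : ℕ × ℕ × BondType} (he : e ∈ bonds) :
      uOp b e ∈ Submonoid.closure (signedBondOps b bonds) :=
    Submonoid.subset_closure (Set.mem_insert_of_mem _ (Set.mem_image_of_mem _ he))
  refine hneg (Submonoid.list_prod_mem _ fun x hx => ?_)
  obtain ⟨k, hk, rfl⟩ := List.mem_map.1 hx
  obtain h | h := hL k (List.mem_range.1 hk)
  · exact hbond h
  · exact hB.uOp_swap hb h ▸ hneg (hbond h)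

theorem commute_uOp_bondTerm (hB : IsProperlyTyped S bonds)
    (hb : IsMajoranaFamilyOn (Function.uncurry b) {p | p.1 ∈ S}) {c : ℕ → A}
    (hbc : ∀ i ∈ S, ∀ t, ∀ j ∈ S, AntiCommute (b i t) (c j)) (J : ℕ × ℕ → ℝ) (he : e ∈ bonds)
    (hf : f ∈ bonds) : Commute (uOp b e) (bondTerm J b c f) := by
  have hmatter : Commute (b e.1 e.2.2 * b e.2.1 e.2.2) (c f.1 * c f.2.1) :=
    have he₁ := hbc e.1 (hB.fst_mem e he) e.2.2
    have he₂ := hbc e.2.1 (hB.snd_mem e he) e.2.2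
    have hf₁ := hB.fst_mem f hf
    have hf₂ := hB.snd_mem f hf
    (he₁ _ hf₁).commute_mul_mul_s8 (he₁ _ hf₂) (he₂ _ hf₁) (he₂ _ hf₂)
  exact ((hB.commute_uOp_uOp hb he hf).mul_right
    ((hmatter.smul_left _).smul_right _)).smul_right _

theorem commute_fermH_of_mem_signedBondOps (hB : IsProperlyTyped S bonds)
    (hb : IsMajoranaFamilyOn (Function.uncurry b) {p | p.1 ∈ S}) {c : ℕ → A}
    (hbc : ∀ i ∈ S, ∀ t, ∀ j ∈ S, AntiCommute (b i t) (c j)) (J : ℕ × ℕ → ℝ) :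
    ∀ x ∈ signedBondOps b bonds, Commute x (fermH J b c bonds) := by
  rintro _ (rfl | ⟨e, he, rfl⟩)
  · exact .neg_one_left _
  · refine Commute.list_sum_right _ _ fun y hy => ?_
    obtain ⟨f, hf, rfl⟩ := List.mem_map.1 hy
    exact hB.commute_uOp_bondTerm hb hbc J he hf

end BondOperators

theorem mono {S : Set ℕ} {bonds bonds' : List (ℕ × ℕ × BondType)} (hB : IsProperlyTyped S bonds)
    (h : bonds' ⊆ bonds) : IsProperlyTyped S bonds' where
  fst_mem e he := hB.fst_mem e (h he)
  snd_mem e he := hB.snd_mem e (h he)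
  fst_ne_snd e he := hB.fst_ne_snd e (h he)
  disjoint e he f hf := hB.disjoint e (h he) f (h hf)

end IsProperlyTyped

section Ladder

variable {N i j : ℕ}

theorem mem_closedBonds_z_iff :
    (i, j, BondType.z) ∈ closedBonds N ↔ i % 2 = 0 ∧ i < 4 * N ∧ j = i + 1 := by
  simp only [closedBonds, openBonds, List.mem_append, List.mem_map, List.mem_range,
    List.mem_cons, Prod.mk.injEq, reduceCtorEq, and_false, and_true, exists_false, or_false,
    List.not_mem_nil]
  constructor
  · rintro ⟨k, hk, rfl, rfl⟩
    omega
  · exact fun h => ⟨i / 2, by omega⟩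

theorem mem_closedBonds_x_iff (hN : 0 < N) :
    (i, j, BondType.x) ∈ closedBonds N ↔
      i % 2 = 1 ∧ i < 4 * N ∧ j < 4 * N ∧ (j = i + 1 ∨ j + 4 * N = i + 1) := by
  simp only [closedBonds, openBonds, List.mem_append, List.mem_map, List.mem_range,
    List.mem_cons, Prod.mk.injEq, reduceCtorEq, and_false, and_true, exists_false, or_false,
    false_or, List.not_mem_nil]
  constructor
  · rintro (⟨k, hk, rfl, rfl⟩ | h) <;> omega
  intro h
  by_cases hi : i = 4 * N - 1
  · exact .inr (by omega)
  · exact .inl ⟨i / 2, by omega⟩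

theorem mem_closedBonds_y_iff (hN : 0 < N) :
    (i, j, BondType.y) ∈ closedBonds N ↔
      i % 2 = 0 ∧ i < 4 * N ∧ j < 4 * N ∧ (j = i + 3 ∨ j + 4 * N = i + 3) := by
  simp only [closedBonds, openBonds, List.mem_append, List.mem_map, List.mem_range,
    List.mem_cons, Prod.mk.injEq, reduceCtorEq, and_false, and_true, exists_false, or_false,
    false_or, List.not_mem_nil]
  constructor
  · rintro (⟨k, hk, rfl, rfl⟩ | h) <;> omega
  intro h
  by_cases hi : i = 4 * N - 2
  · exact .inr (by omega)
  · exact .inl ⟨i / 2, by omega⟩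

theorem isProperlyTyped_closedBonds (hN : 0 < N) :
    IsProperlyTyped {k | k < 4 * N} (closedBonds N) := by
  have hends {i j : ℕ} {t : BondType} (he : (i, j, t) ∈ closedBonds N) :
      i < 4 * N ∧ j < 4 * N ∧ i ≠ j := by
    rcases t with _ | _ | _
    · have := (mem_closedBonds_x_iff hN).1 he
      omega
    · have := (mem_closedBonds_y_iff hN).1 he
      omega
    · have := mem_closedBonds_z_iff.1 he
      omega
  refine ⟨fun _ he => (hends he).1, fun _ he => (hends he).2.1,
    fun _ he => (hends he).2.2, ?_⟩
  -- The endpoints of a bond have opposite parity, the type telling which of them is even; and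
  -- the type and one endpoint determine the other.
  rintro ⟨i, j, t⟩ he ⟨k, l, _⟩ hf hne rfl
  have hne : ¬(i = k ∧ j = l) := fun h => hne (by rw [h.1, h.2])
  change i ≠ k ∧ i ≠ l ∧ j ≠ k ∧ j ≠ l
  rcases t with _ | _ | _
  · have hi := (mem_closedBonds_x_iff hN).1 he
    have hk := (mem_closedBonds_x_iff hN).1 hf
    omega
  · have hi := (mem_closedBonds_y_iff hN).1 he
    have hk := (mem_closedBonds_y_iff hN).1 hf
    omega
  · have hi := mem_closedBonds_z_iff.1 he
    have hk := mem_closedBonds_z_iff.1 hf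
    omega

theorem isProperlyTyped_ladder (hN : 0 < N) {bonds : List (ℕ × ℕ × BondType)}
    (hbonds : bonds = openBonds N ∨ bonds = closedBonds N) :
    IsProperlyTyped {k | k < 4 * N} bonds := by
  obtain rfl | rfl := hbonds
  · exact (isProperlyTyped_closedBonds hN).mono (List.subset_append_left _ _)
  · exact isProperlyTyped_closedBonds hN

end Ladder

section Majorana

variable {V : Type*} [NormedAddCommGroup V] [InnerProductSpace ℂ V] [FiniteDimensional ℂ V]

theorem IsMajoranaFamily.mul_self {S : Type*} {γ : S → (V →ₗ[ℂ] V)} (hγ : IsMajoranaFamily γ)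
    (p : S) : γ p * γ p = 1 := by
  have h := hγ.2 p p
  rw [if_pos rfl, ← two_smul ℂ] at h
  exact smul_right_injective _ two_ne_zero h

theorem IsMajoranaFamily.antiCommute {S : Type*} {γ : S → (V →ₗ[ℂ] V)} (hγ : IsMajoranaFamily γ)
    {p q : S} (hpq : p ≠ q) : AntiCommute (γ p) (γ q) :=
  eq_neg_of_add_eq_zero_left ((hγ.2 p q).trans (if_neg hpq))

variable {N : ℕ} {b : ℕ → BondType → (V →ₗ[ℂ] V)} {c : ℕ → (V →ₗ[ℂ] V)}

theorem IsLadderMajorana.isMajoranaFamilyOn (hbc : IsLadderMajorana N b c) :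
    IsMajoranaFamilyOn (Function.uncurry b) {p | p.1 < 4 * N} where
  isSelfAdjoint p hp := hbc.1 (⟨p.1, hp⟩, some p.2)
  mul_self p hp := IsMajoranaFamily.mul_self hbc (⟨p.1, hp⟩, some p.2)
  antiCommute p hp q hq hpq :=
    IsMajoranaFamily.antiCommute hbc (p := (⟨p.1, hp⟩, some p.2)) (q := (⟨q.1, hq⟩, some q.2))
      fun h => hpq (by simpa [Prod.ext_iff] using h)

theorem IsLadderMajorana.antiCommute_bond_matter (hbc : IsLadderMajorana N b c) (i : ℕ)
    (hi : i < 4 * N) (t : BondType) (j : ℕ) (hj : j < 4 * N) : AntiCommute (b i t) (c j) :=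
  IsMajoranaFamily.antiCommute hbc (p := (⟨i, hi⟩, some t)) (q := (⟨j, hj⟩, none)) (by simp)

end Majorana

theorem vortex_operator_properties_general {A : Type*} [Ring A] [StarRing A] [Algebra ℂ A]
    [StarModule ℂ A] {S : Set ℕ} {bonds : List (ℕ × ℕ × BondType)}
    (hB : IsProperlyTyped S bonds) (J : ℕ × ℕ → ℝ) {b : ℕ → BondType → A} {c : ℕ → A}
    (hb : IsMajoranaFamilyOn (Function.uncurry b) {p | p.1 ∈ S})
    (hbc : ∀ i ∈ S, ∀ t, ∀ j ∈ S, AntiCommute (b i t) (c j)) {L : Loop}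
    (hL : L.IsClosedWalkOf bonds) :
    IsSelfAdjoint (vortexOp b L) ∧
      vortexOp b L * vortexOp b L = 1 ∧
      (∀ L' : Loop, L'.IsClosedWalkOf bonds →
        vortexOp b L * vortexOp b L' = vortexOp b L' * vortexOp b L) ∧
      Commute (vortexOp b L) (fermH J b c bonds) := by
  have hcomm := hB.commute_of_mem_signedBondOps hb
  have hmem := hB.vortexOp_mem_closure_signedBondOps hb hL
  refine ⟨isSelfAdjoint_of_mem_closure hcomm (hB.isSelfAdjoint_of_mem_signedBondOps hb) hmem,
    mul_self_eq_one_of_mem_closure hcomm (hB.mul_self_of_mem_signedBondOps hb) hmem,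
    fun L' hL' => ?_,
    commute_of_mem_closure (hB.commute_fermH_of_mem_signedBondOps hb hbc J) hmem⟩
  exact commute_of_mem_closure_of_mem_closure hcomm hmem
    (hB.vortexOp_mem_closure_signedBondOps hb hL')

/-- For the open or closed ladder of length `N` with real couplings
and a Majorana family indexed by the vertices, the fermionic vortex operators
`B̃(C) = -u_{i₁i₂} ⋯ u_{i_ℓ i₁}` of loops `C` of the ladder are self-adjoint with
square `I` (hence eigenvalues `±1`), mutually commute, and commute with the
fermionic ladder Hamiltonian `H̃`. -/
theorem vortex_operator_properties
    {V : Type*} [NormedAddCommGroup V] [InnerProductSpace ℂ V]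
    [FiniteDimensional ℂ V] [Nontrivial V]
    (N : ℕ) (hN : 2 ≤ N)
    (bonds : List (ℕ × ℕ × BondType))
    (hbonds : bonds = openBonds N ∨ bonds = closedBonds N)
    (J : ℕ × ℕ → ℝ)
    (b : ℕ → BondType → (V →ₗ[ℂ] V)) (c : ℕ → (V →ₗ[ℂ] V))
    (hbc : IsLadderMajorana N b c) :
    ∀ L : Loop, L.IsLoopOf bonds →
      IsSelfAdjoint (vortexOp b L) ∧
      vortexOp b L * vortexOp b L = 1 ∧
      (∀ L' : Loop, L'.IsLoopOf bonds →
        vortexOp b L * vortexOp b L' = vortexOp b L' * vortexOp b L) ∧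
      Commute (vortexOp b L) (fermH J b c bonds) :=
  fun _ hL =>
    have ⟨hsa, hsq, hcomm, hH⟩ := vortex_operator_properties_general
      (isProperlyTyped_ladder (by omega) hbonds) J hbc.isMajoranaFamilyOn
      hbc.antiCommute_bond_matter hL.isClosedWalkOf
    ⟨hsa, hsq, fun _ hL' => hcomm _ hL'.isClosedWalkOf, hH⟩
end
end

section
/- Let V be a nonzero finite-dimensional complex inner product space, H a self-adjoint operator on V, and γ_1, …, γ_n self-adjoint operators with γ_j² = I that mutually commute and each commute with H. Suppose that for each j = 1,…,n there is an invertible operator Q_j on V that commutes with H, commutes with γ_k for every k ≠ j, and anticommutes with γ_j. Let P = ∏_{j=1}^n (I + γ_j)/2. Then the range of P is a nonzero H-invariant subspace, and the set of eigenvalues of H equals the set of eigenvalues of the restriction of H to the range of P. -/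
noncomputable section

/-! A joint fixed vector of the `γ j` inside a nonzero submodule `W` stable under all `γ j` and
`Q j` is built one involution at a time: given `0 ≠ w ∈ W`, either `w + γ w` is a nonzero vector
fixed by `γ`, or `γ w = -w` and then `Q w` is one. Vectors fixed by the earlier involutions form a
submodule stable under the later `γ j` and `Q j`, so the construction iterates. Since `range P` is
the joint `+1` eigenspace, taking `W` to be the whole space gives `range P ≠ ⊥`, and taking `W` to
be an eigenspace of `H` shows that every eigenvalue of `H` survives on `range P`. -/

open Module.End

section Idempotent

variable {S : Type*} [Monoid S]

lemma mul_list_prod_eq_self_of_mem {f : S} {l : List S} (hf : IsIdempotentElem f)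
    (hcomm : ∀ g ∈ l, Commute f g) (hmem : f ∈ l) : f * l.prod = l.prod := by
  induction l with
  | nil => simp at hmem
  | cons g l ih =>
    rw [List.forall_mem_cons] at hcomm
    rw [List.prod_cons]
    rcases List.mem_cons.1 hmem with rfl | hmem
    · rw [← mul_assoc, hf.eq]
    · rw [hcomm.1.left_comm, ih hcomm.2 hmem]

lemma isIdempotentElem_half_one_add {R A : Type*} [CommSemiring R] [Invertible (2 : R)]
    [Semiring A] [Algebra R A] {a : A} (ha : a * a = 1) :
    IsIdempotentElem (⅟(2 : R) • (1 + a)) := by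
  have hsq : (1 + a) * (1 + a) = (2 : R) • (1 + a) := by
    rw [two_smul, mul_add, add_mul, add_mul, ha]
    simp only [one_mul, mul_one]
    abel
  rw [IsIdempotentElem, smul_mul_smul_comm, hsq, smul_smul, mul_assoc, invOf_mul_self, mul_one]

end Idempotent

section Range

variable {R M : Type*}

lemma range_list_prod_of_isIdempotentElem [Semiring R] [AddCommMonoid M] [Module R M]
    {l : List (Module.End R M)} (hidem : ∀ f ∈ l, IsIdempotentElem f)
    (hcomm : ∀ f ∈ l, ∀ g ∈ l, Commute f g) :
    LinearMap.range l.prod = ⨅ f ∈ l, LinearMap.range f := by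
  refine le_antisymm (le_iInf₂ fun f hf ↦ ?_) fun x hx ↦ ?_
  · rw [← mul_list_prod_eq_self_of_mem (hidem f hf) (hcomm f hf) hf]
    exact LinearMap.range_comp_le_range _ _
  · simp only [Submodule.mem_iInf] at hx
    have hfix : ∀ f ∈ l, f ∈ MulAction.stabilizerSubmonoid (Module.End R M) x := fun f hf ↦
      (LinearMap.IsIdempotentElem.mem_range_iff (hidem f hf)).1 (hx f hf)
    exact ⟨x, Submonoid.list_prod_mem _ hfix⟩

variable [CommRing R] [AddCommGroup M] [Module R M] [Invertible (2 : R)]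

lemma range_half_one_add_eq_eigenspace_one {γ : Module.End R M} (hγ : γ * γ = 1) :
    LinearMap.range (⅟(2 : R) • (1 + γ)) = eigenspace γ 1 := by
  ext x
  rw [LinearMap.IsIdempotentElem.mem_range_iff (isIdempotentElem_half_one_add hγ),
    mem_eigenspace_iff, one_smul, LinearMap.smul_apply, invOf_smul_eq_iff, two_smul,
    LinearMap.add_apply, one_apply, add_right_inj]

lemma range_list_prod_half_one_add {n : ℕ} {γ : Fin n → Module.End R M}
    (hγ2 : ∀ j, γ j * γ j = 1) (hγcomm : ∀ j k, Commute (γ j) (γ k)) :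
    LinearMap.range (List.ofFn fun j ↦ ⅟(2 : R) • (1 + γ j)).prod =
      ⨅ j, eigenspace (γ j) 1 := by
  rw [range_list_prod_of_isIdempotentElem]
  · simp only [List.mem_ofFn, iInf_exists, iInf_comm (ι := Module.End R M), iInf_iInf_eq_right,
      range_half_one_add_eq_eigenspace_one (hγ2 _)]
  · simp only [List.forall_mem_ofFn_iff]
    exact fun j ↦ isIdempotentElem_half_one_add (hγ2 j)
  · simp only [List.forall_mem_ofFn_iff]
    intro j k
    have hcomm : Commute (1 + γ j) (1 + γ k) :=
      (Commute.one_left _).add_left ((Commute.one_right _).add_right (hγcomm j k))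
    exact (hcomm.smul_left _).smul_right _

end Range

section Invariant

variable {R M : Type*}

lemma iInf_mem_invtSubmodule [Semiring R] [AddCommMonoid M] [Module R M] {ι : Sort*}
    {f : Module.End R M} {p : ι → Submodule R M} (hp : ∀ i, p i ∈ f.invtSubmodule) :
    ⨅ i, p i ∈ f.invtSubmodule := fun _ hx ↦
  (Submodule.mem_iInf _).2 fun i ↦ hp i ((Submodule.mem_iInf _).1 hx i)

variable [CommRing R] [AddCommGroup M] [Module R M]

lemma eigenspace_mem_invtSubmodule_of_commute {f g : Module.End R M} (h : Commute f g) (μ : R) :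
    eigenspace f μ ∈ g.invtSubmodule :=
  mapsTo_genEigenspace_of_comm h μ 1

lemma hasEigenvalue_restrict_iff {f : Module.End R M} {p : Submodule R M}
    (hfp : ∀ x ∈ p, f x ∈ p) {μ : R} :
    HasEigenvalue (f.restrict hfp) μ ↔ eigenspace f μ ⊓ p ≠ ⊥ := by
  rw [hasEigenvalue_iff, eigenspace, genEigenspace_restrict, ne_eq, ne_eq,
    ← Submodule.disjoint_iff_comap_eq_bot, disjoint_comm, disjoint_iff]

lemma inf_eigenspace_one_ne_bot {γ Q : Module.End R M} {W : Submodule R M} (hW : W ≠ ⊥)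
    (hγ2 : γ * γ = 1) (hQinj : Function.Injective Q) (hQγ : Q * γ = -(γ * Q))
    (hWγ : W ∈ γ.invtSubmodule) (hWQ : W ∈ Q.invtSubmodule) :
    W ⊓ eigenspace γ 1 ≠ ⊥ := by
  obtain ⟨w, hwW, hw0⟩ := W.ne_bot_iff.1 hW
  rw [Submodule.ne_bot_iff]
  by_cases hsum : w + γ w = 0
  · have hγw : γ w = -w := (neg_eq_of_add_eq_zero_right hsum).symm
    have hfix : γ (Q w) = Q w := by
      have h := LinearMap.congr_fun hQγ w
      rw [mul_apply, hγw, map_neg, LinearMap.neg_apply, neg_inj] at h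
      exact h.symm
    exact ⟨Q w, ⟨hWQ hwW, mem_eigenspace_iff.2 (by rw [hfix, one_smul])⟩,
      (map_ne_zero_iff Q hQinj).2 hw0⟩
  · have hfix : γ (w + γ w) = w + γ w := by
      rw [map_add, ← mul_apply, hγ2, one_apply, add_comm]
    exact ⟨w + γ w, ⟨W.add_mem hwW (hWγ hwW), mem_eigenspace_iff.2 (by rw [hfix, one_smul])⟩, hsum⟩

lemma inf_iInf_eigenspace_one_ne_bot {ι : Type*} [Finite ι] {γ : ι → Module.End R M}
    {W : Submodule R M} (hW : W ≠ ⊥) (hγ2 : ∀ j, γ j * γ j = 1)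
    (hγcomm : ∀ j k, Commute (γ j) (γ k)) (hWγ : ∀ j, W ∈ (γ j).invtSubmodule)
    (hQ : ∀ j, ∃ Q : Module.End R M, Function.Injective Q ∧ W ∈ Q.invtSubmodule ∧
      (∀ k, k ≠ j → Commute Q (γ k)) ∧ Q * γ j = -(γ j * Q)) :
    W ⊓ ⨅ j, eigenspace (γ j) 1 ≠ ⊥ := by
  classical
  suffices h : ∀ s : Finset ι, W ⊓ ⨅ j ∈ s, eigenspace (γ j) 1 ≠ ⊥ by
    have := Fintype.ofFinite ι
    simpa only [Finset.mem_univ, iInf_pos] using h Finset.univ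
  intro s
  induction s using Finset.induction_on with
  | empty => simpa using hW
  | insert a s ha ih =>
    obtain ⟨Q, hQinj, hWQ, hQcomm, hQanti⟩ := hQ a
    have inf_mem {f : Module.End R M} (hWf : W ∈ f.invtSubmodule)
        (hf : ∀ j ∈ s, Commute f (γ j)) :
        W ⊓ ⨅ j ∈ s, eigenspace (γ j) 1 ∈ f.invtSubmodule :=
      invtSubmodule.inf_mem hWf <| iInf_mem_invtSubmodule fun j ↦ iInf_mem_invtSubmodule fun hj ↦
        eigenspace_mem_invtSubmodule_of_commute (hf j hj).symm 1
    have hstep := inf_eigenspace_one_ne_bot ih (hγ2 a) hQinj hQanti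
      (inf_mem (hWγ a) fun j _ ↦ hγcomm a j)
      (inf_mem hWQ fun j hj ↦ hQcomm j (ne_of_mem_of_not_mem hj ha))
    rwa [Finset.iInf_insert, inf_comm (eigenspace _ _), ← inf_assoc]

end Invariant

theorem eigenvalues_eq_eigenvalues_on_projected_subspace_general
    {R M : Type*} [CommRing R] [Invertible (2 : R)] [AddCommGroup M] [Module R M] [Nontrivial M]
    {n : ℕ} {H : Module.End R M} {γ : Fin n → Module.End R M}
    (hγ2 : ∀ j, γ j * γ j = 1) (hγcomm : ∀ j k, Commute (γ j) (γ k))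
    (hγH : ∀ j, Commute (γ j) H)
    (hQ : ∀ j, ∃ Q : Module.End R M, Function.Injective Q ∧ Commute Q H ∧
      (∀ k, k ≠ j → Commute Q (γ k)) ∧ Q * γ j = -(γ j * Q))
    {P : Module.End R M} (hP : P = (List.ofFn fun j ↦ ⅟(2 : R) • (1 + γ j)).prod) :
    LinearMap.range P ≠ ⊥ ∧
      ∃ hinv : ∀ x ∈ LinearMap.range P, H x ∈ LinearMap.range P,
        {μ : R | HasEigenvalue H μ} = {μ : R | HasEigenvalue (H.restrict hinv) μ} := by
  have hrange : LinearMap.range P = ⨅ j, eigenspace (γ j) 1 := by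
    rw [hP, range_list_prod_half_one_add hγ2 hγcomm]
  have inf_range_ne_bot {W : Submodule R M} (hW : W ≠ ⊥)
      (hinvt : ∀ f, Commute f H → W ∈ invtSubmodule f) : W ⊓ LinearMap.range P ≠ ⊥ := by
    rw [hrange]
    refine inf_iInf_eigenspace_one_ne_bot hW hγ2 hγcomm (fun j ↦ hinvt _ (hγH j)) fun j ↦ ?_
    exact (hQ j).imp fun Q hQj ↦ hQj.imp_right (And.imp_left (hinvt Q))
  have hinv : LinearMap.range P ∈ H.invtSubmodule := hrange ▸
    iInf_mem_invtSubmodule fun j ↦ eigenspace_mem_invtSubmodule_of_commute (hγH j) 1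
  refine ⟨?_, hinv, Set.ext fun μ ↦ ⟨fun hμ ↦ ?_, fun hμ ↦ ?_⟩⟩
  · simpa using inf_range_ne_bot top_ne_bot fun f _ ↦ invtSubmodule.top_mem f
  · exact (hasEigenvalue_restrict_iff hinv).2 <| inf_range_ne_bot hμ fun f hf ↦
      eigenspace_mem_invtSubmodule_of_commute hf.symm μ
  · exact ne_bot_of_le_ne_bot ((hasEigenvalue_restrict_iff hinv).1 hμ) inf_le_left

/-- Let `V` be a nonzero finite-dimensional complex inner product
space, `H` a self-adjoint operator on `V`, and `γ_1, …, γ_n` self-adjoint commuting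
involutions, each commuting with `H`. Suppose for each `j` there is an invertible
operator `Q_j` commuting with `H` and with every `γ_k` (`k ≠ j`) and anticommuting
with `γ_j`. Let `P = ∏_j (I + γ_j)/2` be the projection onto the joint `+1`
eigenspace. Then the range of `P` is a nonzero `H`-invariant subspace, and the
eigenvalues of `H` coincide with the eigenvalues of the restriction of `H` to the
range of `P`. -/
theorem eigenvalues_eq_eigenvalues_on_projected_subspace
    {V : Type*} [NormedAddCommGroup V] [InnerProductSpace ℂ V]
    [FiniteDimensional ℂ V] [Nontrivial V]
    (n : ℕ) (H : V →ₗ[ℂ] V) (hH : IsSelfAdjoint H)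
    (γ : Fin n → (V →ₗ[ℂ] V))
    (hγsa : ∀ j, IsSelfAdjoint (γ j))
    (hγ2 : ∀ j, γ j * γ j = 1)
    (hγcomm : ∀ j k, Commute (γ j) (γ k))
    (hγH : ∀ j, Commute (γ j) H)
    (hQ : ∀ j : Fin n, ∃ Q : V →ₗ[ℂ] V, IsUnit Q ∧ Commute Q H ∧
      (∀ k, k ≠ j → Commute Q (γ k)) ∧ Q * γ j = -(γ j * Q))
    (P : V →ₗ[ℂ] V)
    (hP : P = (List.ofFn fun j : Fin n => (2 : ℂ)⁻¹ • (1 + γ j)).prod) :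
    LinearMap.range P ≠ ⊥ ∧
      ∃ hinv : ∀ x ∈ LinearMap.range P, H x ∈ LinearMap.range P,
        {μ : ℂ | Module.End.HasEigenvalue H μ} =
          {μ : ℂ | Module.End.HasEigenvalue (LinearMap.restrict H hinv) μ} := by
  have hQinj := fun j ↦ (hQ j).imp fun Q ↦ And.imp_left fun h ↦ ((isUnit_iff Q).1 h).injective
  exact eigenvalues_eq_eigenvalues_on_projected_subspace_general hγ2 hγcomm hγH hQinj
    (by simpa only [invOf_eq_inv] using hP)
end
end
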